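/- There exists an absolute constant γ₀ > 0 such that for every constant ε ∈ (0,1) and every ρ > 0 there exists m₀ such that for all m ≥ m₀ and all r with 1 ≤ r ≤ γ₀·m the following holds. Set K = ⌊(1-ε)·binom(m,≤r)⌋ and let Z = {z₁,…,z_K} be a uniformly random K-element subset of F₂^m. Then with probability at least 1 - ρ, the evaluation vectors z₁^{(r)}, …, z_K^{(r)} are linearly independent over F₂. -/

import Mathlib

/-- `binomLe m r = ∑_{i=0}^r C(m,i)`, written `binom(m, ≤ r)`. -/
def binomLe (m r : ℕ) : ℕ := ∑ i ∈ Finset.range (r + 1), Nat.choose m i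

/-- Index type for multilinear monomials of degree at most `r` in `m` variables:
subsets `S ⊆ {1,…,m}` with `|S| ≤ r`. -/
abbrev MonIdx (m r : ℕ) := {S : Finset (Fin m) // S.card ≤ r}

/-- `RM(m,r)` as the space of coefficient vectors of multilinear polynomials in `m`
variables of total degree at most `r` over `F₂`. -/
abbrev RMcode (m r : ℕ) := MonIdx m r → ZMod 2

/-- Evaluation of a polynomial (given by its coefficients) at the point `z`,
as a linear map: `c ↦ ∑_{|S| ≤ r} c_S ∏_{i ∈ S} z_i`. -/
def evalLin (m r : ℕ) (z : Fin m → ZMod 2) : RMcode m r →ₗ[ZMod 2] ZMod 2 :=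
  ∑ S : MonIdx m r, (∏ i ∈ S.1, z i) • LinearMap.proj S

/-- The degree-`r` vanishing space `I_r(Z)` of the set `Z ⊆ F₂^m`. -/
def vanishing (m r : ℕ) (Z : Set (Fin m → ZMod 2)) : Submodule (ZMod 2) (RMcode m r) :=
  ⨅ z ∈ Z, LinearMap.ker (evalLin m r z)

/-- The vector `z^{(r)}` of evaluations at `z` of all multilinear monomials of degree `≤ r`. -/
def monVec (m r : ℕ) (z : Fin m → ZMod 2) : MonIdx m r → ZMod 2 := fun S => ∏ i ∈ S.1, z i

/-- Fractional Hamming weight of the polynomial with coefficients `c`. -/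
noncomputable def wt (m r : ℕ) (c : RMcode m r) : ℝ :=
  ((Finset.univ.filter (fun z : Fin m → ZMod 2 => evalLin m r z c ≠ 0)).card : ℝ) / 2 ^ m

/-- The number of zeros in `F₂^m` of the polynomial with coefficients `c`,
i.e. `(1 - wt(P)) · 2^m`. -/
def numZeros (m r : ℕ) (c : RMcode m r) : ℕ :=
  (Finset.univ.filter (fun z : Fin m → ZMod 2 => evalLin m r z c = 0)).card

/-- The degree-`r` closure of `Z ⊆ F₂^m`. -/
def closureSet (m r : ℕ) (Z : Set (Fin m → ZMod 2)) : Set (Fin m → ZMod 2) :=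
  {u | ∀ c ∈ vanishing m r Z, evalLin m r u c = 0}

/-!
First-moment method. Let `N = binom(m, ≤ r)`, and let `I` be the space of polynomials of degree at
most `r` vanishing on the random set `Z`. It always has at least `2 ^ (N - K)` elements, and at
least twice as many when the evaluation vectors are dependent, so dependence has probability at
most `ρ` as soon as the mean of `2 ^ K * |I|` is at most `(1 + ρ) 2 ^ N`. Sampling without
replacement only decreases this mean, which is therefore at most `∑ f, (1 + bias f) ^ K`, where
`1 + bias f = 2 Pr[f = 0]`. Polynomials of bias at most `ρ / (4 N)` contribute at most
`(1 + ρ / 2) 2 ^ N`. The others are so few that their larger terms do not matter: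

* If `bias f ≥ β`, then most values of `f` are recovered by a majority vote over the differences
  of `f` along a random `d`-dimensional cube of side vectors, with `2 ^ d` of order `β ^ (-2)` up to
  the error allowed. The vote does not change when a polynomial invariant under the side vectors is
  added to `f`, so one cube yields at most `2 ^ (N - binom(m - d, ≤ r))` decoded functions.
* If `f` has small weight `δ`, then `f` agrees outside a set of density at most `3 * 4 ^ s * δ ^ 2`
  with a product of two of its derivatives of order `s`, and these have degree at most `r - s`.

An approximation is turned into an exact count because a polynomial of degree at most `r` is
determined by its values on any translate of the Hamming ball of radius `r`, which has `N` points,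
and on some translate the approximation makes no more errors than on average.
-/

section RandomEvaluation

open Finset
open scoped BigOperators

section Probability

variable {X Y : Type*} [Fintype X] [Fintype Y] {p q : X → Prop}

open scoped Classical in
/-- The probability that `p` holds at a uniformly random point of the finite type `X`. -/
noncomputable def prob (p : X → Prop) : ℝ := 𝔼 x, if p x then 1 else 0

lemma prob_eq_card_div [DecidablePred p] : prob p = #{x | p x} / Fintype.card X := by
  classical
  rw [prob, Fintype.expect_eq_sum_div_card, ← sum_boole]
  congr!

lemma prob_nonneg : 0 ≤ prob p := expect_nonneg fun _ _ => by positivity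

lemma prob_mono (h : ∀ x, p x → q x) : prob p ≤ prob q :=
  expect_le_expect fun x _ => by
    by_cases hp : p x
    · simp [hp, h x hp]
    · rw [if_neg hp]
      positivity

lemma prob_exists_mem_le_sum {ι : Type*} (I : Finset ι) (p : ι → X → Prop) :
    prob (fun x => ∃ i ∈ I, p i x) ≤ ∑ i ∈ I, prob (p i) := by
  classical
  simp only [prob]
  rw [← expect_sum_comm]
  refine expect_le_expect fun x _ => ?_
  split_ifs with h
  · obtain ⟨i, hi, hp⟩ := h
    calc (1 : ℝ) = if p i x then 1 else 0 := (if_pos hp).symm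
      _ ≤ _ := single_le_sum (f := fun i => if p i x then (1 : ℝ) else 0)
        (fun _ _ => by positivity) hi
  · exact sum_nonneg fun _ _ => by positivity

lemma prob_or_le : prob (fun x => p x ∨ q x) ≤ prob p + prob q := by
  simpa [or_comm] using prob_exists_mem_le_sum univ fun (b : Bool) => cond b p q

lemma prob_not [Nonempty X] : prob (fun x => ¬ p x) = 1 - prob p := by
  simp only [prob]
  rw [← Fintype.expect_const (ι := X) (1 : ℝ), ← expect_sub_distrib]
  refine expect_congr rfl fun x _ => ?_
  by_cases h : p x <;> simp [h]

lemma prob_comp_equiv (e : X ≃ Y) (p : Y → Prop) : prob (fun x => p (e x)) = prob p :=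
  Fintype.expect_equiv e _ _ fun _ => rfl

lemma prob_and_prod (p : X → Prop) (q : Y → Prop) :
    prob (fun z : X × Y => p z.1 ∧ q z.2) = prob p * prob q := by
  simp only [prob]
  rw [Fintype.expect_mul_expect, ← univ_product_univ, expect_product]
  refine expect_congr rfl fun x _ => expect_congr rfl fun y _ => ?_
  by_cases hp : p x <;> by_cases hq : q y <;> simp [hp, hq]

lemma expect_prob_comm (p : X → Y → Prop) :
    𝔼 x, prob (p x) = 𝔼 y, prob fun x => p x y := expect_comm _ _ _

lemma mul_prob_le_expect {c : ℝ} {g : X → ℝ} (hg : ∀ x, 0 ≤ g x) (h : ∀ x, p x → c ≤ g x) :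
    c * prob p ≤ 𝔼 x, g x := by
  rw [prob, mul_expect]
  refine expect_le_expect fun x _ => ?_
  by_cases hx : p x
  · simpa [hx] using h x hx
  · simpa [hx] using hg x

end Probability

section MomentMethod

lemma choose_le_choose_mul_div_pow {z M : ℕ} (h : z ≤ M) (K : ℕ) :
    (z.choose K : ℝ) ≤ M.choose K * ((z : ℝ) / M) ^ K := by
  induction K with
  | zero => simp
  | succ K ih =>
    have hstep : ((z - K : ℕ) : ℝ) ≤ z / M * (M - K : ℕ) := by
      rcases le_total z K with hz | hz
      · rw [Nat.sub_eq_zero_of_le hz, Nat.cast_zero]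
        positivity
      · rcases M.eq_zero_or_pos with rfl | hM
        · simp [Nat.le_zero.mp h]
        · have hzM : (z : ℝ) ≤ M := by exact_mod_cast h
          rw [Nat.cast_sub hz, Nat.cast_sub (hz.trans h), div_mul_eq_mul_div,
            le_div_iff₀ (by exact_mod_cast hM)]
          nlinarith [mul_le_mul_of_nonneg_left hzM (Nat.cast_nonneg K : (0 : ℝ) ≤ K)]
    refine le_of_mul_le_mul_right ?_ (by positivity : (0 : ℝ) < (K + 1 : ℕ))
    calc (z.choose (K + 1) * (K + 1 : ℕ) : ℝ) = z.choose K * (z - K : ℕ) := by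
          exact_mod_cast Nat.choose_succ_right_eq z K
      _ ≤ M.choose K * ((z : ℝ) / M) ^ K * (z / M * (M - K : ℕ)) := by gcongr
      _ = M.choose K * (M - K : ℕ) * ((z : ℝ) / M) ^ (K + 1) := by ring
      _ = M.choose (K + 1) * (K + 1 : ℕ) * ((z : ℝ) / M) ^ (K + 1) := by
          congr 1
          exact_mod_cast (Nat.choose_succ_right_eq M K).symm
      _ = _ := by ring

variable {k V X ι : Type*} [Field k] [AddCommGroup V] [Module k V] [Fintype V] [Fintype X]

lemma sum_card_common_kernel_le (e : X → Module.Dual k V) (K : ℕ) :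
    (∑ Z ∈ powersetCard K univ, Nat.card {v // ∀ z : {x // x ∈ Z}, e z.1 v = 0} : ℝ) ≤
      (Fintype.card X).choose K * ∑ v, prob (fun x => e x v = 0) ^ K := by
  classical
  have hcount : ∀ v : V, #{Z ∈ powersetCard K (univ : Finset X) | ∀ z ∈ Z, e z v = 0} =
      (#{x | e x v = 0}).choose K := fun v => by
    rw [← card_powersetCard]
    congr 1
    ext Z
    simp [mem_powersetCard, subset_iff, and_comm]
  calc (∑ Z ∈ powersetCard K univ, Nat.card {v // ∀ z : {x // x ∈ Z}, e z.1 v = 0} : ℝ)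
      = ∑ Z ∈ powersetCard K univ, ∑ v : V, if ∀ z ∈ Z, e z v = 0 then 1 else 0 := by
        simp only [Nat.card_eq_fintype_card, Fintype.card_subtype, Subtype.forall, sum_boole]
    _ = ∑ v : V, ((#{x | e x v = 0}).choose K : ℝ) := by
        rw [sum_comm]
        simp only [sum_boole, hcount]
    _ ≤ ∑ v : V, (Fintype.card X).choose K * prob (fun x => e x v = 0) ^ K := by
        gcongr with v
        rw [prob_eq_card_div]
        exact choose_le_choose_mul_div_pow (card_le_univ _) K
    _ = _ := (mul_sum ..).symm

variable [Fintype k]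

open Module in
lemma card_common_kernel_mul_pow_finrank_span (φ : ι → Dual k V) :
    Nat.card {v // ∀ i, φ i v = 0} *
      Fintype.card k ^ finrank k (Submodule.span k (Set.range φ)) = Fintype.card V := by
  let W := Submodule.span k (Set.range φ)
  have hmem : ∀ v, (∀ i, φ i v = 0) ↔ v ∈ W.dualCoannihilator := fun v => by
    rw [← SetLike.mem_coe, Submodule.coe_dualCoannihilator_span]
    simp
  rw [Nat.card_congr (Equiv.subtypeEquivRight hmem), ← Nat.card_eq_fintype_card (α := k),
    ← Nat.card_eq_fintype_card (α := V), natCard_eq_pow_finrank (K := k) (V := V),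
    natCard_eq_pow_finrank (K := k) (V := W.dualCoannihilator), ← pow_add,
    add_comm, Subspace.finrank_add_finrank_dualCoannihilator_eq]

open Module in
lemma card_le_card_common_kernel_mul_pow [Fintype ι] (φ : ι → Dual k V) :
    Fintype.card V ≤ Nat.card {v // ∀ i, φ i v = 0} * Fintype.card k ^ Fintype.card ι := by
  rw [← card_common_kernel_mul_pow_finrank_span φ]
  gcongr
  · exact Fintype.card_pos
  · exact finrank_range_le_card φ

open Module in
lemma card_mul_card_le_of_not_linearIndependent [Fintype ι] {φ : ι → Dual k V}
    (h : ¬ LinearIndependent k φ) :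
    Fintype.card k * Fintype.card V ≤
      Nat.card {v // ∀ i, φ i v = 0} * Fintype.card k ^ Fintype.card ι := by
  have hrank : finrank k (Submodule.span k (Set.range φ)) + 1 ≤ Fintype.card ι := by
    rwa [linearIndependent_iff_card_le_finrank_span, not_le] at h
  rw [← card_common_kernel_mul_pow_finrank_span φ, mul_left_comm, ← pow_succ']
  gcongr
  exact Fintype.card_pos

open scoped Classical in
lemma card_mul_add_card_not_linearIndependent_le (e : X → Module.Dual k V) (K : ℕ) :
    (Fintype.card V : ℝ) * ((Fintype.card X).choose K +
      #{Z ∈ powersetCard K (univ : Finset X) |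
        ¬ LinearIndependent k fun z : {x // x ∈ Z} => e z.1}) ≤
      (∑ Z ∈ powersetCard K univ, Nat.card {v // ∀ z : {x // x ∈ Z}, e z.1 v = 0} : ℝ) *
        Fintype.card k ^ K := by
  rw [← card_univ (α := X), ← card_powersetCard K univ, ← sum_boole, cast_card, ← sum_add_distrib,
    mul_sum, sum_mul]
  refine sum_le_sum fun Z hZ => ?_
  have hZK : Fintype.card {x // x ∈ Z} = K := by simpa [mem_powersetCard] using hZ
  split_ifs with hi
  · simpa [hZK] using Nat.cast_le (α := ℝ).mpr
      (card_le_card_common_kernel_mul_pow fun z : {x // x ∈ Z} => e z.1)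
  · have hk : (2 : ℝ) ≤ Fintype.card k := by exact_mod_cast Fintype.one_lt_card (α := k)
    have hdep := Nat.cast_le (α := ℝ).mpr (card_mul_card_le_of_not_linearIndependent hi)
    push_cast [hZK] at hdep
    nlinarith [(Nat.cast_nonneg (Fintype.card V) : (0 : ℝ) ≤ _)]

theorem card_linearIndependent_ge_of_moment_le (e : X → Module.Dual k V) {K : ℕ} {ρ : ℝ}
    (h : ∑ v, (Fintype.card k * prob fun x => e x v = 0) ^ K ≤ (1 + ρ) * Fintype.card V) :
    (1 - ρ) * Nat.card {Z : Finset X // #Z = K} ≤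
      Nat.card {Z : Finset X // #Z = K ∧ LinearIndependent k fun z : {x // x ∈ Z} => e z.1} := by
  classical
  let indep (Z : Finset X) : Prop := LinearIndependent k fun z : {x // x ∈ Z} => e z.1
  set q := Fintype.card k
  set n := (Fintype.card X).choose K
  set dep := #{Z ∈ powersetCard K (univ : Finset X) | ¬ indep Z}
  have hdep : (Fintype.card V : ℝ) * (n + dep) ≤ Fintype.card V * ((1 + ρ) * n) := by
    calc (Fintype.card V : ℝ) * (n + dep)
        ≤ n * (∑ v, prob (fun x => e x v = 0) ^ K) * q ^ K :=
          (card_mul_add_card_not_linearIndependent_le e K).trans <| by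
            gcongr
            exact sum_card_common_kernel_le e K
      _ = n * ∑ v, (q * prob fun x => e x v = 0) ^ K := by
          simp only [mul_pow, ← mul_sum]
          ring
      _ ≤ n * ((1 + ρ) * Fintype.card V) := by gcongr
      _ = _ := by ring
  have hindep : Nat.card {Z : Finset X // #Z = K ∧ indep Z} =
      #{Z ∈ powersetCard K (univ : Finset X) | indep Z} := by
    rw [Nat.card_eq_fintype_card, Fintype.card_subtype]
    congr 1
    ext Z
    simp [mem_powersetCard]
  have hsplit : (#{Z ∈ powersetCard K (univ : Finset X) | indep Z} : ℝ) + dep = n := by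
    exact_mod_cast (card_filter_add_card_filter_not indep).trans (card_powersetCard K univ)
  rw [Nat.card_eq_fintype_card (α := {Z : Finset X // #Z = K}), Fintype.card_finset_len, hindep]
  linarith [le_of_mul_le_mul_left hdep (by exact_mod_cast Fintype.card_pos)]

end MomentMethod

section Cube

/-- The sum of `g` over the vertices of the (possibly degenerate) cube based at `x` with edge
directions `y`. For `g` with values in `ZMod 2` this is the iterated derivative of `g` at `x` in
the directions `y`. -/
def cubeSum {n : ℕ} {G A : Type*} [AddCommMonoid G] [AddCommMonoid A] (y : Fin n → G)
    (g : G → A) (x : G) : A :=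
  ∑ T : Finset (Fin n), g (x + ∑ i ∈ T, y i)

variable {n : ℕ} {G A : Type*} [AddCommGroup G] [Fintype G] [AddCommMonoid A]

lemma expect_eq_expect_expect_add_single (Φ : (Fin n → G) → ℝ) (i : Fin n) :
    𝔼 y, Φ y = 𝔼 y : Fin n → G, 𝔼 a, Φ (y + Pi.single i a) := by
  rw [expect_comm, ← Fintype.expect_const (ι := G) (𝔼 y, Φ y)]
  exact expect_congr rfl fun a _ =>
    (Fintype.expect_equiv (Equiv.addRight (Pi.single i a : Fin n → G)) _ Φ fun _ => rfl).symm

lemma expect_cube_mul {T T' : Finset (Fin n)} {i : Fin n} (hT : i ∈ T) (hT' : i ∉ T') (φ ψ : G → ℝ)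
    (x : G) :
    𝔼 y : Fin n → G, φ (x + ∑ j ∈ T, y j) * ψ (x + ∑ j ∈ T', y j) =
      (𝔼 z, φ z) * 𝔼 y : Fin n → G, ψ (x + ∑ j ∈ T', y j) := by
  rw [expect_eq_expect_expect_add_single _ i, mul_expect]
  refine expect_congr rfl fun y _ => ?_
  simp only [Pi.add_apply, sum_add_distrib, sum_pi_single', hT, hT', if_true, if_false, add_zero]
  rw [← expect_mul]
  congr 1
  exact Fintype.expect_equiv (Equiv.addLeft (x + ∑ j ∈ T, y j)) _ _ fun _ => by simp

lemma expect_cube {T : Finset (Fin n)} (hT : T.Nonempty) (φ : G → ℝ) (x : G) :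
    𝔼 y : Fin n → G, φ (x + ∑ j ∈ T, y j) = 𝔼 z, φ z := by
  obtain ⟨i, hi⟩ := hT
  simpa using expect_cube_mul hi (notMem_empty i) φ (fun _ => 1) x

lemma prob_cube {T : Finset (Fin n)} (hT : T.Nonempty) (p : G → Prop) (x : G) :
    prob (fun y : Fin n → G => p (x + ∑ j ∈ T, y j)) = prob p := by
  classical exact expect_cube hT (fun z => if p z then 1 else 0) x

lemma expect_cube_mul_cube_of_ne {h : G → ℝ} (hh : 𝔼 x, h x = 0) {T T' : Finset (Fin n)}
    (hne : T ≠ T') (x : G) :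
    𝔼 y : Fin n → G, h (x + ∑ j ∈ T, y j) * h (x + ∑ j ∈ T', y j) = 0 := by
  classical
  obtain ⟨i, hi⟩ := symmDiff_nonempty.mpr hne
  rcases mem_symmDiff.mp hi with ⟨hT, hT'⟩ | ⟨hT', hT⟩
  · rw [expect_cube_mul hT hT', hh, zero_mul]
  · simp only [mul_comm (h (x + ∑ _ ∈ T, _))]
    rw [expect_cube_mul hT' hT, hh, zero_mul]

lemma expect_expect_cubeSum_sq {h : G → ℝ} (hh : 𝔼 x, h x = 0) :
    𝔼 y : Fin n → G, 𝔼 x, cubeSum y h x ^ 2 = 2 ^ n * 𝔼 x, h x ^ 2 := by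
  have hdiag (T : Finset (Fin n)) :
      𝔼 y : Fin n → G, 𝔼 x, h (x + ∑ j ∈ T, y j) ^ 2 = 𝔼 x, h x ^ 2 := by
    rw [← Fintype.expect_const (ι := Fin n → G) (𝔼 x, h x ^ 2)]
    exact expect_congr rfl fun y _ =>
      Fintype.expect_equiv (Equiv.addRight (∑ j ∈ T, y j)) _ _ fun _ => rfl
  simp only [cubeSum, sq, sum_mul_sum, expect_sum_comm]
  have hcard : (2 : ℝ) ^ n = #(univ : Finset (Finset (Fin n))) := by simp
  rw [hcard, ← nsmul_eq_mul, ← sum_const]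
  refine sum_congr rfl fun T _ => ?_
  rw [sum_eq_single T]
  · simpa only [sq] using hdiag T
  · rintro T' - hne
    rw [expect_comm]
    exact expect_eq_zero fun x _ => expect_cube_mul_cube_of_ne hh hne.symm x
  · simp

lemma prob_cubeSum_ne_le (f : G → A) (x : G) :
    prob (fun y : Fin n → G => cubeSum y f x ≠ f x) ≤
      2 ^ n * prob fun z => f z ≠ 0 := by
  classical
  calc prob (fun y : Fin n → G => cubeSum y f x ≠ f x)
      ≤ prob fun y : Fin n → G =>
          ∃ T ∈ univ.erase (∅ : Finset (Fin n)), f (x + ∑ j ∈ T, y j) ≠ 0 := by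
        refine prob_mono fun y hy => ?_
        contrapose! hy
        rw [cubeSum, ← add_sum_erase _ _ (mem_univ ∅), sum_eq_zero hy]
        simp
    _ ≤ ∑ T ∈ univ.erase (∅ : Finset (Fin n)), prob fun y : Fin n → G => f (x + ∑ j ∈ T, y j) ≠ 0 :=
        prob_exists_mem_le_sum _ _
    _ = ∑ _ ∈ univ.erase (∅ : Finset (Fin n)), prob fun z => f z ≠ 0 :=
        sum_congr rfl fun _ hT =>
          prob_cube (nonempty_iff_ne_empty.mpr (ne_of_mem_erase hT)) (fun z => f z ≠ 0) x
    _ ≤ ∑ _ : Finset (Fin n), prob fun z => f z ≠ 0 :=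
        sum_le_sum_of_subset_of_nonneg (erase_subset _ _) fun _ _ _ => prob_nonneg
    _ = _ := by simp

lemma zmod_two_eq_one_of_ne_zero {a : ZMod 2} (h : a ≠ 0) : a = 1 := Fin.eq_one_of_ne_zero a h

lemma prob_ne_cubeSum_mul_cubeSum_le (n : ℕ) (f : G → ZMod 2) (x : G) :
    prob (fun y : (Fin n → G) × (Fin n → G) => f x ≠ cubeSum y.1 f x * cubeSum y.2 f x) ≤
      (2 ^ n * prob fun z => f z ≠ 0) ^ 2 +
        if f x ≠ 0 then 2 * (2 ^ n * prob fun z => f z ≠ 0) else 0 := by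
  let far (y : Fin n → G) : Prop := cubeSum y f x ≠ f x
  set p := 2 ^ n * prob fun z => f z ≠ 0
  have hfar : prob far ≤ p := prob_cubeSum_ne_le f x
  by_cases hx : f x = 0
  · rw [if_neg (not_not.mpr hx), add_zero]
    calc _ ≤ prob fun y : (Fin n → G) × (Fin n → G) => far y.1 ∧ far y.2 :=
          prob_mono fun y hy => by simpa [far, hx, eq_comm, not_or] using hy
      _ = prob far ^ 2 := by rw [prob_and_prod, sq]
      _ ≤ p ^ 2 := pow_le_pow_left₀ prob_nonneg hfar 2
  · have hone : f x = 1 := zmod_two_eq_one_of_ne_zero hx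
    have htrue : prob (fun _ : Fin n → G => True) = 1 := by simp [prob]
    rw [if_pos hx]
    calc _ ≤ prob fun y : (Fin n → G) × (Fin n → G) => (far y.1 ∧ True) ∨ (True ∧ far y.2) :=
          prob_mono fun y hy => by
            by_contra hnot
            simp only [far, and_true, true_and, not_or, not_not] at hnot
            simp [hnot.1, hnot.2, hone] at hy
      _ ≤ prob far * 1 + 1 * prob far := by
          rw [← htrue, ← prob_and_prod, ← prob_and_prod]
          exact prob_or_le
      _ ≤ p ^ 2 + 2 * p := by nlinarith [sq_nonneg p]

lemma exists_cubeSum_mul_cubeSum_approx (n : ℕ) (f : G → ZMod 2) :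
    ∃ y y' : Fin n → G, prob (fun x => f x ≠ cubeSum y f x * cubeSum y' f x) ≤
      3 * 4 ^ n * prob (fun x => f x ≠ 0) ^ 2 := by
  set δ := prob fun x => f x ≠ 0
  have hmean : 𝔼 y : (Fin n → G) × (Fin n → G),
      prob (fun x => f x ≠ cubeSum y.1 f x * cubeSum y.2 f x) ≤ 3 * 4 ^ n * δ ^ 2 := by
    rw [expect_prob_comm]
    calc _ ≤ 𝔼 x, ((2 ^ n * δ) ^ 2 + if f x ≠ 0 then 2 * (2 ^ n * δ) else 0) :=
          expect_le_expect fun x _ => prob_ne_cubeSum_mul_cubeSum_le n f x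
      _ = (2 ^ n * δ) ^ 2 + 2 * (2 ^ n * δ) * δ := by
          rw [expect_add_distrib, Fintype.expect_const]
          simp only [δ, prob, mul_expect, mul_ite, mul_one, mul_zero]
      _ = (4 ^ n + 2 * 2 ^ n) * δ ^ 2 := by
          rw [show (4 : ℝ) = 2 ^ 2 by norm_num, ← pow_mul, mul_pow, ← pow_mul]
          ring
      _ ≤ (4 ^ n + 2 * 4 ^ n) * δ ^ 2 := by
          gcongr
          norm_num
      _ = _ := by ring
  obtain ⟨y, -, hy⟩ := exists_le_of_expect_le univ_nonempty hmean
  exact ⟨y.1, y.2, hy⟩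

end Cube

section Bias

/-- The nontrivial character `a ↦ (-1)ᵃ` of `F₂`, with real values. -/
def signChar : AddChar (ZMod 2) ℝ := AddChar.zmodChar 2 (neg_one_sq (R := ℝ))

lemma signChar_one : signChar 1 = -1 := by
  simp [signChar, AddChar.zmodChar_apply, ZMod.val_one]

lemma signChar_eq_one_sub (a : ZMod 2) : signChar a = 1 - 2 * if a ≠ 0 then 1 else 0 := by
  by_cases h : a = 0
  · simp [h]
  · norm_num [zmod_two_eq_one_of_ne_zero h, signChar_one]

lemma signChar_sq (a : ZMod 2) : signChar a ^ 2 = 1 := by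
  by_cases h : a = 0
  · simp [h]
  · norm_num [zmod_two_eq_one_of_ne_zero h, signChar_one]

/-- The bias `Pr[f = 0] - Pr[f ≠ 0]` of a function to `F₂` at a uniformly random point. -/
noncomputable def bias {X : Type*} [Fintype X] (f : X → ZMod 2) : ℝ := 𝔼 x, signChar (f x)

section Basic

variable {X : Type*} [Fintype X] [Nonempty X] (f : X → ZMod 2)

lemma bias_eq_one_sub : bias f = 1 - 2 * prob fun x => f x ≠ 0 := by
  simp only [bias, prob, signChar_eq_one_sub]
  rw [expect_sub_distrib, Fintype.expect_const, ← mul_expect]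
  congr!

lemma one_add_bias : 1 + bias f = 2 * prob fun x => f x = 0 := by
  have h := prob_not (p := fun x => f x = 0)
  rw [bias_eq_one_sub, h]
  ring

lemma one_add_bias_nonneg : 0 ≤ 1 + bias f := by
  rw [one_add_bias]
  exact mul_nonneg zero_le_two prob_nonneg

lemma bias_le_one : bias f ≤ 1 := by
  rw [bias_eq_one_sub]
  linarith [prob_nonneg (p := fun x => f x ≠ 0)]

end Basic

variable {n : ℕ} {G : Type*} [AddCommGroup G]

/-- The decoded value at `x` is the `a ∈ F₂` for which the majority of the differences
`f v - f x`, over the vertices `v` of the cube based at `x` with edge directions `y`, equal `a`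
(ties giving `1`). When `f` is biased towards `0` it recovers `f` at most points, although it
depends on derivatives of `f` only. -/
noncomputable def decode (y : Fin n → G) (f : G → ZMod 2) (x : G) : ZMod 2 :=
  if 0 < cubeSum y (fun v => signChar (f v - f x)) x then 0 else 1

lemma decode_eq_of_cubeSum_pos {y : Fin n → G} {f : G → ZMod 2} {x : G}
    (h : 0 < cubeSum y (fun v => signChar (f v)) x) : decode y f x = f x := by
  have hfactor : cubeSum y (fun v => signChar (f v - f x)) x =
      cubeSum y (fun v => signChar (f v)) x * signChar (f x) := by
    simp only [cubeSum, sub_eq_add_neg, ZMod.neg_eq_self_mod_two, AddChar.map_add_eq_mul, sum_mul]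
  rw [decode, hfactor]
  by_cases hx : f x = 0
  · simpa [hx] using h
  · rw [zmod_two_eq_one_of_ne_zero hx, signChar_one, if_neg (by linarith)]

lemma decode_add_eq_of_forall_cube {y : Fin n → G} {h : G → ZMod 2}
    (hh : ∀ x T, h (x + ∑ i ∈ T, y i) = h x) (f : G → ZMod 2) : decode y (f + h) = decode y f := by
  ext1 x
  simp only [decode, cubeSum, Pi.add_apply, hh, add_sub_add_right_eq_sub]

lemma exists_prob_decode_ne_le [Fintype G] {f : G → ZMod 2} (hf : 0 < bias f) (n : ℕ) :
    ∃ y : Fin n → G, 2 ^ n * bias f ^ 2 * prob (fun x => decode y f x ≠ f x) ≤ 1 := by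
  let h (x : G) : ℝ := signChar (f x) - bias f
  have hmean : 𝔼 x, h x = 0 := by
    simp only [h]
    rw [expect_sub_distrib, Fintype.expect_const]
    exact sub_self _
  have hvar : 𝔼 x, h x ^ 2 = 1 - bias f ^ 2 := by
    calc 𝔼 x, h x ^ 2 = 𝔼 x, (1 + bias f ^ 2 - 2 * bias f * signChar (f x)) :=
          expect_congr rfl fun x _ => by linear_combination signChar_sq (f x)
      _ = 1 + bias f ^ 2 - 2 * bias f * bias f := by
          rw [expect_sub_distrib, Fintype.expect_const, ← mul_expect, ← bias]
      _ = _ := by ring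
  obtain ⟨y, -, hy⟩ := exists_le_of_expect_le univ_nonempty
    (expect_expect_cubeSum_sq (n := n) hmean).le
  have hfail : ∀ x, decode y f x ≠ f x → (2 ^ n * bias f) ^ 2 ≤ cubeSum y h x ^ 2 :=
    fun x hx => by
      have hsub : cubeSum y h x = cubeSum y (fun v => signChar (f v)) x - 2 ^ n * bias f := by
        simp [cubeSum, h, sum_sub_distrib]
      have hle := not_lt.mp (mt decode_eq_of_cubeSum_pos hx)
      rw [← neg_sq (cubeSum y h x)]
      exact pow_le_pow_left₀ (by positivity) (by linarith) 2
  have hcheb := (mul_prob_le_expect (fun x => sq_nonneg (cubeSum y h x)) hfail).trans hy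
  refine ⟨y, le_of_mul_le_mul_left ?_ (by positivity : (0 : ℝ) < 2 ^ n)⟩
  calc 2 ^ n * (2 ^ n * bias f ^ 2 * prob fun x => decode y f x ≠ f x)
      = (2 ^ n * bias f) ^ 2 * prob fun x => decode y f x ≠ f x := by ring
    _ ≤ 2 ^ n * (1 - bias f ^ 2) := hvar ▸ hcheb
    _ ≤ 2 ^ n * 1 := by
        gcongr
        linarith [sq_nonneg (bias f)]

end Bias

section PolySpace

variable {m n r s : ℕ}

/-- The multilinear monomials of degree at most `r`, as functions on `F₂^m`. -/
def monomialFun (m r : ℕ) (S : MonIdx m r) (z : Fin m → ZMod 2) : ZMod 2 := monVec m r z S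

/-- The space of functions on `F₂^m` represented by polynomials of degree at most `r`. -/
def polySpace (m r : ℕ) : Submodule (ZMod 2) ((Fin m → ZMod 2) → ZMod 2) :=
  Submodule.span (ZMod 2) (Set.range (monomialFun m r))

noncomputable instance (m r : ℕ) : Fintype (polySpace m r) := Fintype.ofFinite _

lemma monomial_mem_polySpace {S : Finset (Fin m)} (h : #S ≤ r) :
    (fun z => ∏ i ∈ S, z i) ∈ polySpace m r :=
  Submodule.subset_span ⟨⟨S, h⟩, rfl⟩

lemma polySpace_le {W : Submodule (ZMod 2) ((Fin m → ZMod 2) → ZMod 2)}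
    (h : ∀ S : Finset (Fin m), #S ≤ r → (fun z => ∏ i ∈ S, z i) ∈ W) : polySpace m r ≤ W :=
  Submodule.span_le.mpr (Set.range_subset_iff.mpr fun S => h S S.2)

lemma polySpace_mono (h : r ≤ s) : polySpace m r ≤ polySpace m s :=
  polySpace_le fun _ hS => monomial_mem_polySpace (hS.trans h)

lemma prod_eq_ite_forall_eq_one {ι : Type*} (S : Finset ι) (z : ι → ZMod 2) :
    ∏ i ∈ S, z i = if ∀ i ∈ S, z i = 1 then 1 else 0 := by
  split_ifs with h
  · exact prod_eq_one h
  · push Not at h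
    obtain ⟨i, hi, hz⟩ := h
    exact prod_eq_zero hi (by_contra fun h0 => hz (zmod_two_eq_one_of_ne_zero h0))

lemma mul_mem_polySpace {f g : (Fin m → ZMod 2) → ZMod 2} (hf : f ∈ polySpace m r)
    (hg : g ∈ polySpace m s) : f * g ∈ polySpace m (r + s) := by
  have hmul := Submodule.mul_mem_mul hf hg
  rw [polySpace, polySpace, Submodule.span_mul_span] at hmul
  refine Submodule.span_le.mpr ?_ hmul
  rintro _ ⟨_, ⟨S, rfl⟩, _, ⟨T, rfl⟩, rfl⟩
  have hunion : monomialFun m r S * monomialFun m s T = fun z => ∏ i ∈ S.1 ∪ T.1, z i := by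
    ext z
    simp [monomialFun, monVec, prod_eq_ite_forall_eq_one, or_imp, forall_and, ← ite_and, and_comm]
  simp only [hunion]
  exact monomial_mem_polySpace ((card_union_le _ _).trans (add_le_add S.2 T.2))

lemma prod_mem_polySpace {ι : Type*} (S : Finset ι) {g : ι → (Fin m → ZMod 2) → ZMod 2}
    (hg : ∀ i, g i ∈ polySpace m 1) : ∏ i ∈ S, g i ∈ polySpace m #S := by
  classical
  induction S using Finset.induction_on with
  | empty => simpa using! monomial_mem_polySpace (S := ∅) (m := m) le_rfl
  | insert i S hi ih =>
    rw [prod_insert hi, card_insert_of_notMem hi, add_comm]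
    exact mul_mem_polySpace (hg i) ih

lemma comp_linearMap_mem_polySpace {f : (Fin n → ZMod 2) → ZMod 2} (hf : f ∈ polySpace n r)
    (L : (Fin m → ZMod 2) →ₗ[ZMod 2] Fin n → ZMod 2) : f ∘ L ∈ polySpace m r := by
  have hcoord (i : Fin m) : (fun z => z i) ∈ polySpace m 1 := by
    simpa using monomial_mem_polySpace (card_singleton i).le
  have hL (i : Fin n) : (fun z => L z i) ∈ polySpace m 1 := by
    have hsum : (fun z => L z i) = ∑ j, L (Pi.single j 1) i • fun z : Fin m → ZMod 2 => z j := by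
      ext z
      conv_lhs => rw [← (Pi.basisFun (ZMod 2) (Fin m)).sum_repr z]
      simp [mul_comm]
    rw [hsum]
    exact sum_mem fun j _ => Submodule.smul_mem _ _ (hcoord j)
  suffices polySpace n r ≤ (polySpace m r).comap (LinearMap.funLeft (ZMod 2) (ZMod 2) L) from
    this hf
  refine polySpace_le fun S hS => ?_
  have hprod : LinearMap.funLeft (ZMod 2) (ZMod 2) L (fun z => ∏ i ∈ S, z i) =
      ∏ i ∈ S, fun z => L z i := by
    ext z
    simp [LinearMap.funLeft_apply]
  rw [Submodule.mem_comap, hprod]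
  exact polySpace_mono hS (prod_mem_polySpace S hL)

section Derivative

variable {f : (Fin m → ZMod 2) → ZMod 2}

lemma derivative_mem_polySpace (hf : f ∈ polySpace m r) (w : Fin m → ZMod 2) :
    (fun z => f (z + w) - f z) ∈ polySpace m (r - 1) := by
  let D := LinearMap.funLeft (ZMod 2) (ZMod 2) (· + w) - LinearMap.id
  suffices polySpace m r ≤ (polySpace m (r - 1)).comap D from this hf
  refine polySpace_le fun S hS => ?_
  have hexpand : D (fun z => ∏ i ∈ S, z i) =
      ∑ T ∈ S.ssubsets, (∏ i ∈ S \ T, w i) • fun z : Fin m → ZMod 2 => ∏ i ∈ T, z i := by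
    ext z
    have hadd := prod_add z w S
    rw [← insert_erase (mem_powerset_self S), sum_insert (notMem_erase _ _)] at hadd
    simp [D, LinearMap.funLeft_apply, hadd, ssubsets, mul_comm]
  rw [Submodule.mem_comap, hexpand]
  refine sum_mem fun T hT => Submodule.smul_mem _ _ (monomial_mem_polySpace ?_)
  have := card_lt_card (mem_ssubsets.mp hT)
  omega

lemma comp_add_right_mem_polySpace (hf : f ∈ polySpace m r) (w : Fin m → ZMod 2) :
    (fun z => f (z + w)) ∈ polySpace m r := by
  convert add_mem (polySpace_mono (r.sub_le 1) (derivative_mem_polySpace hf w)) hf using 1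
  ext z
  simp

lemma sum_powerset_mem_polySpace {ι : Type*} (hf : f ∈ polySpace m r)
    (y : ι → Fin m → ZMod 2) (U : Finset ι) :
    (fun x => ∑ T ∈ U.powerset, f (x + ∑ i ∈ T, y i)) ∈ polySpace m (r - #U) := by
  classical
  induction U using Finset.induction_on with
  | empty => simpa using hf
  | insert a U ha ih =>
    have hderiv := derivative_mem_polySpace ih (y a)
    rw [card_insert_of_notMem ha, ← Nat.sub_sub]
    convert hderiv using 1
    ext x
    rw [sum_powerset_insert ha, CharTwo.sub_eq_add, add_comm]
    congr 1
    refine sum_congr rfl fun T hT => ?_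
    rw [sum_insert fun h => ha (mem_powerset.mp hT h), add_assoc]

lemma cubeSum_mem_polySpace (hf : f ∈ polySpace m r) (y : Fin s → Fin m → ZMod 2) :
    cubeSum y f ∈ polySpace m (r - s) := by
  simpa [cubeSum] using! sum_powerset_mem_polySpace hf y univ

end Derivative

section Basis

/-- The characteristic vector of `T`. The vectors with `#T ≤ r` form the Hamming ball of radius
`r`, on which a polynomial of degree at most `r` is determined by its values. -/
def indicatorVec (T : Finset (Fin m)) (i : Fin m) : ZMod 2 := if i ∈ T then 1 else 0

lemma monomialFun_indicatorVec (S : MonIdx m r) (T : Finset (Fin m)) :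
    monomialFun m r S (indicatorVec T) = if S.1 ⊆ T then 1 else 0 := by
  simp [monomialFun, monVec, prod_eq_ite_forall_eq_one, indicatorVec, subset_iff]

lemma eq_zero_of_sum_monomialFun_indicatorVec_eq_zero {c : MonIdx m r → ZMod 2}
    (h : ∀ T : MonIdx m r, ∑ S, c S * monomialFun m r S (indicatorVec T.1) = 0) : c = 0 := by
  suffices ∀ T : Finset (Fin m), ∀ hT : #T ≤ r, c ⟨T, hT⟩ = 0 from funext fun T => this T.1 T.2
  intro T
  induction T using Finset.strongInduction with
  | H T ih =>
    intro hT
    have hsum := h ⟨T, hT⟩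
    rw [sum_eq_single ⟨T, hT⟩] at hsum
    · simpa [monomialFun_indicatorVec] using hsum
    · intro S _ hne
      rw [monomialFun_indicatorVec]
      split_ifs with hST
      · rw [ih S.1 (hST.ssubset_of_ne fun h => hne (Subtype.ext h)) S.2, zero_mul]
      · exact mul_zero _
    · simp

lemma linearIndependent_monomialFun : LinearIndependent (ZMod 2) (monomialFun m r) := by
  refine Fintype.linearIndependent_iff.mpr fun c hc => congrFun ?_
  exact eq_zero_of_sum_monomialFun_indicatorVec_eq_zero fun T => by
    simpa using congrFun hc (indicatorVec T.1)

lemma eq_zero_of_forall_indicatorVec_eq_zero {f : (Fin m → ZMod 2) → ZMod 2}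
    (hf : f ∈ polySpace m r) (h : ∀ T : MonIdx m r, f (indicatorVec T.1) = 0) : f = 0 := by
  obtain ⟨c, rfl⟩ := (Submodule.mem_span_range_iff_exists_fun _).mp hf
  have hc : c = 0 := eq_zero_of_sum_monomialFun_indicatorVec_eq_zero fun T => by simpa using h T
  simp [hc]

lemma card_monIdx : Fintype.card (MonIdx m r) = binomLe m r := by
  have hunion : ({S : Finset (Fin m) | #S ≤ r} : Finset _) =
      (range (r + 1)).biUnion fun i => powersetCard i univ := by
    ext S
    simp [mem_powersetCard]
  rw [Fintype.card_subtype, binomLe, hunion,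
    card_biUnion fun i _ j _ hij => pairwise_disjoint_powersetCard _ hij]
  simp

lemma card_polySpace : Fintype.card (polySpace m r) = 2 ^ binomLe m r := by
  rw [Module.card_eq_pow_finrank (K := ZMod 2), ZMod.card, polySpace,
    finrank_span_eq_card linearIndependent_monomialFun, card_monIdx]

end Basis

section Evaluation

/-- Evaluation at `z`, as a linear functional on the polynomials of degree at most `r`. -/
def polyEval (m r : ℕ) (z : Fin m → ZMod 2) : Module.Dual (ZMod 2) (polySpace m r) :=
  (LinearMap.proj z).comp (polySpace m r).subtype

lemma polyEval_apply (z : Fin m → ZMod 2) (f : polySpace m r) : polyEval m r z f = f.1 z := rfl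

lemma linearIndependent_monVec_of_polyEval {ι : Type*} {z : ι → Fin m → ZMod 2}
    (h : LinearIndependent (ZMod 2) fun i => polyEval m r (z i)) :
    LinearIndependent (ZMod 2) fun i => monVec m r (z i) := by
  let coords : Module.Dual (ZMod 2) (polySpace m r) →ₗ[ZMod 2] MonIdx m r → ZMod 2 :=
    LinearMap.pi fun S => LinearMap.applyₗ ⟨monomialFun m r S, Submodule.subset_span ⟨S, rfl⟩⟩
  refine h.map' coords (LinearMap.ker_eq_bot'.mpr fun φ hφ => ?_)
  refine (Submodule.linearMap_eq_iff_of_eq_span _ _ rfl).mpr ?_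
  rintro ⟨_, S, rfl⟩
  exact congrFun hφ S

end Evaluation

end PolySpace

section Approximation

lemma card_filter_card_le_exp {ι : Type*} [Fintype ι] {u : ℝ} (hu : 0 < u) (a : ℕ) :
    (#{D : Finset ι | (#D : ℝ) ≤ u ^ (a + 1) * Fintype.card ι} : ℝ) ≤
      Real.exp ((a + 1) * u ^ a * Fintype.card ι) := by
  set n : ℝ := (Fintype.card ι : ℝ)
  have hweight : ∀ D : Finset ι, (#D : ℝ) ≤ u ^ (a + 1) * n →
      1 ≤ Real.exp (a * u ^ a * n) * (u ^ a) ^ #D := by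
    intro D hD
    have hlog : 0 ≤ a * (1 / u) * (u ^ (a + 1) * n - #D) + a * (1 / u + Real.log u) * #D := by
      have hinv := Real.one_sub_inv_le_log_of_pos hu
      have : 0 ≤ 1 / u + Real.log u := by rw [one_div]; linarith
      have := sub_nonneg.mpr hD
      positivity
    have hpow : (u ^ a) ^ #D = Real.exp (#D * (a * Real.log u)) := by
      rw [Real.exp_nat_mul, Real.exp_nat_mul, Real.exp_log hu]
    rw [hpow, ← Real.exp_add, Real.one_le_exp_iff]
    convert hlog using 1
    field_simp
    ring
  calc (#{D : Finset ι | (#D : ℝ) ≤ u ^ (a + 1) * n} : ℝ)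
      = ∑ D : Finset ι with (#D : ℝ) ≤ u ^ (a + 1) * n, (1 : ℝ) := by simp
    _ ≤ ∑ D : Finset ι with (#D : ℝ) ≤ u ^ (a + 1) * n,
          Real.exp (a * u ^ a * n) * (u ^ a) ^ #D :=
        sum_le_sum fun D hD => hweight D (mem_filter.mp hD).2
    _ ≤ ∑ D : Finset ι, Real.exp (a * u ^ a * n) * (u ^ a) ^ #D :=
        sum_le_univ_sum_of_nonneg fun D => by positivity
    _ = Real.exp (a * u ^ a * n) * (u ^ a + 1) ^ Fintype.card ι := by
        rw [← mul_sum, ← Fintype.sum_pow_mul_eq_add_pow]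
        simp
    _ ≤ Real.exp (a * u ^ a * n) * Real.exp (u ^ a) ^ Fintype.card ι := by
        gcongr
        exact Real.add_one_le_exp _
    _ = Real.exp ((a + 1) * u ^ a * n) := by
        rw [← Real.exp_nat_mul, ← Real.exp_add]
        simp only [n]
        ring_nf

variable {G ι Φ : Type*} [AddCommGroup G] [Fintype G] [Fintype ι] [Nonempty ι]

lemma exists_prob_comp_add_le (b : ι → G) (p : G → Prop) :
    ∃ v, prob (fun i => p (b i + v)) ≤ prob p := by
  have hmean : 𝔼 v, prob (fun i => p (b i + v)) = prob p := by
    rw [expect_prob_comm]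
    simp only [fun i => prob_comp_equiv (Equiv.addLeft (b i)) p, ← Equiv.coe_addLeft]
    exact Fintype.expect_const _
  obtain ⟨v, -, hv⟩ := exists_le_of_expect_le univ_nonempty hmean.le
  exact ⟨v, hv⟩

lemma card_le_of_approx {φ : Φ → G → ZMod 2} {b : ι → G} {F : Finset Φ} {A : Finset (G → ZMod 2)}
    {u : ℝ} (hu : 0 < u) (a : ℕ)
    (hdet : ∀ f ∈ F, ∀ f' ∈ F, ∀ v, (∀ i, φ f (b i + v) = φ f' (b i + v)) → f = f')
    (happrox : ∀ f ∈ F, ∃ g ∈ A, prob (fun x => φ f x ≠ g x) ≤ u ^ (a + 1)) :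
    (#F : ℝ) ≤ #A * Fintype.card G * Real.exp ((a + 1) * u ^ a * Fintype.card ι) := by
  classical
  have hcode : ∀ f ∈ F, ∃ g ∈ A, ∃ v,
      (#{i | φ f (b i + v) ≠ g (b i + v)} : ℝ) ≤ u ^ (a + 1) * Fintype.card ι := by
    intro f hf
    obtain ⟨g, hg, hfg⟩ := happrox f hf
    obtain ⟨v, hv⟩ := exists_prob_comp_add_le b fun x => φ f x ≠ g x
    refine ⟨g, hg, v, ?_⟩
    have h := hv.trans hfg
    rwa [prob_eq_card_div, div_le_iff₀ (by positivity)] at h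
  choose! g hg v hv using hcode
  let D (f : Φ) : Finset ι := {i | φ f (b i + v f) ≠ g f (b i + v f)}
  let S : Finset (Finset ι) := {D | (#D : ℝ) ≤ u ^ (a + 1) * Fintype.card ι}
  have hcard : #F ≤ #(A ×ˢ (univ : Finset G) ×ˢ S) := by
    refine card_le_card_of_injOn (fun f => (g f, v f, D f)) (fun f hf => ?_) ?_
    · simpa [S, hg f hf] using hv f hf
    · intro f hf f' hf' h
      simp only [Prod.mk.injEq] at h
      obtain ⟨hgg, hvv, hD⟩ := h
      refine hdet f hf f' hf' (v f) fun i => ?_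
      have hmem : i ∈ D f ↔ i ∈ D f' := by rw [hD]
      simp only [D, mem_filter, mem_univ, true_and, ← hgg, ← hvv] at hmem
      have htwo : ∀ x y z : ZMod 2, (x ≠ z ↔ y ≠ z) → x = y := by decide
      exact htwo _ _ _ hmem
  calc (#F : ℝ) ≤ #(A ×ˢ (univ : Finset G) ×ˢ S) := Nat.cast_le.mpr hcard
    _ = #A * Fintype.card G * #S := by
        rw [card_product, card_product, card_univ]
        push_cast
        ring
    _ ≤ _ := by
        gcongr
        exact card_filter_card_le_exp hu a

end Approximation

section Counting

variable {m r d : ℕ} {F : Finset (polySpace m r)} {u β : ℝ}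

lemma card_polySpace_le_of_approx {A : Finset ((Fin m → ZMod 2) → ZMod 2)} (hu : 0 < u) (a : ℕ)
    (h : ∀ f ∈ F, ∃ g ∈ A, prob (fun x => f.1 x ≠ g x) ≤ u ^ (a + 1)) :
    (#F : ℝ) ≤ #A * 2 ^ m * Real.exp ((a + 1) * u ^ a * binomLe m r) := by
  have : Nonempty (MonIdx m r) := ⟨⟨∅, by simp⟩⟩
  have hdet : ∀ f ∈ F, ∀ f' ∈ F, ∀ v,
      (∀ T : MonIdx m r, f.1 (indicatorVec T.1 + v) = f'.1 (indicatorVec T.1 + v)) → f = f' := by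
    intro f _ f' _ v hff'
    have hzero := eq_zero_of_forall_indicatorVec_eq_zero
      (comp_add_right_mem_polySpace (f - f').2 v) fun T => sub_eq_zero.mpr (hff' T)
    refine sub_eq_zero.mp (Subtype.ext (funext fun x => ?_))
    simpa using congrFun hzero (x - v)
  simpa [card_monIdx] using card_le_of_approx hu a hdet h

lemma card_le_of_prob_ne_zero_le (hu : 0 < u) (a : ℕ)
    (h : ∀ f ∈ F, prob (fun x => f.1 x ≠ 0) ≤ u ^ (a + 1)) :
    (#F : ℝ) ≤ 2 ^ m * Real.exp ((a + 1) * u ^ a * binomLe m r) := by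
  simpa using card_polySpace_le_of_approx (A := {0}) hu a fun f hf =>
    ⟨0, mem_singleton_self 0, h f hf⟩

lemma card_le_of_prob_ne_zero_sq_le (hu : 0 < u) (a s : ℕ)
    (h : ∀ f ∈ F, 3 * 4 ^ s * prob (fun x => f.1 x ≠ 0) ^ 2 ≤ u ^ (a + 1)) :
    (#F : ℝ) ≤
      4 ^ binomLe m (r - s) * 2 ^ m * Real.exp ((a + 1) * u ^ a * binomLe m r) := by
  classical
  let A : Finset ((Fin m → ZMod 2) → ZMod 2) :=
    univ.image fun g : polySpace m (r - s) × polySpace m (r - s) => g.1.1 * g.2.1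
  have hA : (#A : ℝ) ≤ 4 ^ binomLe m (r - s) := by
    have hle : #A ≤ _ := card_image_le
    rw [card_univ, Fintype.card_prod, card_polySpace, ← mul_pow] at hle
    exact_mod_cast hle
  refine (card_polySpace_le_of_approx (A := A) hu a fun f hf => ?_).trans (by gcongr)
  obtain ⟨y, y', hy⟩ := exists_cubeSum_mul_cubeSum_approx s f.1
  exact ⟨cubeSum y f.1 * cubeSum y' f.1, mem_image.mpr ⟨(⟨_, cubeSum_mem_polySpace f.2 y⟩,
    ⟨_, cubeSum_mem_polySpace f.2 y'⟩), mem_univ _, rfl⟩, hy.trans (h f hf)⟩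

lemma exists_surjective_forall_map_eq_zero {k V : Type*} [Field k] [AddCommGroup V] [Module k V]
    [FiniteDimensional k V] (y : Fin d → V) {n : ℕ} (hn : n ≤ Module.finrank k V - d) :
    ∃ L : V →ₗ[k] Fin n → k, Function.Surjective L ∧ ∀ i, L (y i) = 0 := by
  let W := Submodule.span k (Set.range y)
  have hW : Module.finrank k W ≤ d := (finrank_range_le_card y).trans (Fintype.card_fin d).le
  have hquot := W.finrank_quotient_add_finrank
  obtain ⟨g, hg⟩ : ∃ g : (Fin n → k) →ₗ[k] V ⧸ W, Function.Injective g :=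
    finrank_le_iff_exists_linearMap.mp (by rw [Module.finrank_fin_fun]; omega)
  obtain ⟨φ, hφ⟩ := g.exists_leftInverse_of_injective (LinearMap.ker_eq_bot.mpr hg)
  refine ⟨φ ∘ₗ W.mkQ, ?_, fun i => ?_⟩
  · exact (LinearMap.surjective_of_comp_eq_id g φ hφ).comp W.mkQ_surjective
  · have : W.mkQ (y i) = 0 := (Submodule.Quotient.mk_eq_zero W).mpr
      (Submodule.subset_span (Set.mem_range_self i))
    rw [LinearMap.comp_apply, this, map_zero]

open scoped Classical in
lemma card_image_decode_mul_le (y : Fin d → Fin m → ZMod 2) :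
    2 ^ binomLe (m - d) r * #(univ.image fun f : polySpace m r => decode y f.1) ≤
      2 ^ binomLe m r := by
  obtain ⟨L, hL, hy⟩ := exists_surjective_forall_map_eq_zero (k := ZMod 2) y (n := m - d)
    (by rw [Module.finrank_fin_fun])
  have hcube (g : (Fin (m - d) → ZMod 2) → ZMod 2) (x : Fin m → ZMod 2) (T : Finset (Fin d)) :
      (g ∘ L) (x + ∑ i ∈ T, y i) = (g ∘ L) x := by
    simp [hy]
  rw [← card_polySpace, ← card_polySpace, ← card_univ, ← card_univ]
  refine mul_card_image_le_card _ _ fun b hb => ?_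
  obtain ⟨f, -, rfl⟩ := mem_image.mp hb
  refine card_le_card_of_injOn
    (fun g => f + ⟨g.1 ∘ L, comp_linearMap_mem_polySpace g.2 L⟩) (fun g _ => ?_) ?_
  · simpa using decode_add_eq_of_forall_cube (hcube g.1) f.1
  · intro g _ g' _ hgg'
    exact Subtype.ext (hL.injective_comp_right (congrArg Subtype.val (add_left_cancel hgg')))

lemma card_le_of_le_bias (hβ : 0 < β) (hu : 0 < u) (h1 : 1 ≤ u ^ 2 * (2 ^ d * β ^ 2))
    (h : ∀ f ∈ F, β ≤ bias f.1) :
    (#F : ℝ) ≤ (2 ^ m) ^ d * (2 ^ binomLe m r / 2 ^ binomLe (m - d) r) * 2 ^ m *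
      Real.exp (2 * u * binomLe m r) := by
  classical
  let A : Finset ((Fin m → ZMod 2) → ZMod 2) :=
    univ.biUnion fun y : Fin d → Fin m → ZMod 2 => univ.image fun f : polySpace m r => decode y f.1
  have hA : (#A : ℝ) ≤ (2 ^ m) ^ d * (2 ^ binomLe m r / 2 ^ binomLe (m - d) r) := by
    have hle : #A ≤ _ := card_biUnion_le
    calc (#A : ℝ) ≤ ∑ y : Fin d → Fin m → ZMod 2,
          (#(univ.image fun f : polySpace m r => decode y f.1) : ℝ) := by exact_mod_cast hle
      _ ≤ ∑ y : Fin d → Fin m → ZMod 2, (2 ^ binomLe m r / 2 ^ binomLe (m - d) r : ℝ) := by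
          refine sum_le_sum fun y _ => ?_
          rw [le_div_iff₀' (by positivity)]
          exact_mod_cast card_image_decode_mul_le y
      _ = _ := by simp
  have hcount := card_polySpace_le_of_approx (A := A) hu 1 fun f hf => by
    have hbias := h f hf
    obtain ⟨y, hy⟩ := exists_prob_decode_ne_le (hβ.trans_le hbias) d
    refine ⟨decode y f.1,
      mem_biUnion.mpr ⟨y, mem_univ y, mem_image_of_mem _ (mem_univ f)⟩, ?_⟩
    simp_rw [ne_comm (a := f.1 _)]
    set p := prob fun x => decode y f.1 x ≠ f.1 x
    have hp : 0 ≤ p := prob_nonneg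
    calc p ≤ u ^ 2 * (2 ^ d * β ^ 2) * p := le_mul_of_one_le_left hp h1
      _ ≤ u ^ 2 * (2 ^ d * bias f.1 ^ 2) * p := by gcongr
      _ = u ^ 2 * (2 ^ d * bias f.1 ^ 2 * p) := by ring
      _ ≤ u ^ 2 := mul_le_of_le_one_right (by positivity) hy
  calc (#F : ℝ) ≤ #A * 2 ^ m * Real.exp (2 * u * binomLe m r) := by
        simpa [one_add_one_eq_two] using hcount
    _ ≤ _ := by gcongr

end Counting

section Binomial

variable {m r s c d : ℕ}

lemma binomLe_mono (h : s ≤ r) : binomLe m s ≤ binomLe m r :=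
  sum_le_sum_of_subset (range_mono (Nat.succ_le_succ h))

lemma binomLe_one : binomLe m 1 = m + 1 := by
  simp [binomLe, sum_range_succ, add_comm]

lemma lt_binomLe (hr : 1 ≤ r) : m < binomLe m r :=
  m.lt_succ_self.trans_le (binomLe_one.symm.trans_le (binomLe_mono hr))

lemma sq_le_four_mul_binomLe (hr : 2 ≤ r) : m ^ 2 ≤ 4 * binomLe m r := by
  have htwo : binomLe m 2 = 1 + m + m.choose 2 := by simp [binomLe, sum_range_succ]
  have hchoose : m.choose 2 * 2 + m = m ^ 2 := by
    rw [Nat.choose_two_right, Nat.div_two_mul_two_of_even (Nat.even_mul_pred_self m),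
      Nat.mul_sub_one, ← sq, Nat.sub_add_cancel (Nat.le_self_pow two_ne_zero m)]
  have hmono := binomLe_mono (m := m) hr
  omega

lemma mul_binomLe_le_binomLe_succ (h : c * (r + 1) + r ≤ m) :
    c * binomLe m r ≤ binomLe m (r + 1) := by
  have hchoose : ∀ i ∈ range (r + 1), c * m.choose i ≤ m.choose (i + 1) := by
    intro i hi
    have hir : i ≤ r := mem_range_succ_iff.mp hi
    have hci : c * (i + 1) ≤ m - i := by
      have : c * (i + 1) ≤ c * (r + 1) := by gcongr
      omega
    refine Nat.le_of_mul_le_mul_right (c := i + 1) ?_ i.succ_pos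
    calc c * m.choose i * (i + 1) = m.choose i * (c * (i + 1)) := by ring
      _ ≤ m.choose i * (m - i) := by gcongr
      _ = m.choose (i + 1) * (i + 1) := (Nat.choose_succ_right_eq m i).symm
  rw [binomLe, binomLe, mul_sum, sum_range_succ' _ (r + 1)]
  exact (sum_le_sum hchoose).trans (Nat.le_add_right _ _)

lemma pow_mul_binomLe_sub_le (h : (c + 1) * r ≤ m) (s : ℕ) :
    c ^ s * binomLe m (r - s) ≤ binomLe m r + c ^ s := by
  rcases le_or_gt s r with hs | hs
  · refine le_add_right ?_
    induction s with
    | zero => simp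
    | succ s ih =>
      obtain ⟨t, ht⟩ : ∃ t, r - s = t + 1 := ⟨r - (s + 1), by omega⟩
      have hcond : c * (t + 1) + t ≤ m := by
        have : (c + 1) * (t + 1) ≤ (c + 1) * r := by gcongr; omega
        linarith
      rw [show r - (s + 1) = t by omega]
      calc c ^ (s + 1) * binomLe m t = c ^ s * (c * binomLe m t) := by ring
        _ ≤ c ^ s * binomLe m (r - s) := by
          rw [ht]
          gcongr
          exact mul_binomLe_le_binomLe_succ hcond
        _ ≤ binomLe m r := ih (by omega)
  · rw [Nat.sub_eq_zero_of_le hs.le]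
    simp [binomLe]

lemma binomLe_succ_mul_le (m r : ℕ) :
    (binomLe (m + 1) r : ℝ) * (1 - r / (m + 1)) ≤ binomLe m r := by
  rw [binomLe, binomLe, Nat.cast_sum, Nat.cast_sum, sum_mul]
  refine sum_le_sum fun i hi => ?_
  have hir : (i : ℝ) ≤ r := by exact_mod_cast mem_range_succ_iff.mp hi
  rcases le_or_gt i (m + 1) with him | him
  · have hchoose : (m.choose i : ℝ) * (m + 1) = (m + 1).choose i * (m + 1 - i) := by
      have := Nat.choose_mul_succ_eq m i
      rw [← Nat.cast_inj (R := ℝ)] at this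
      push_cast [Nat.cast_sub him] at this
      exact this
    calc ((m + 1).choose i : ℝ) * (1 - r / (m + 1)) ≤ (m + 1).choose i * (1 - i / (m + 1)) := by
          gcongr
      _ = m.choose i := by
          field_simp
          linarith
  · simp [Nat.choose_eq_zero_of_lt him]

lemma one_sub_pow_mul_binomLe_le {γ : ℝ} (hγ : 2 * γ ≤ 1) (hr : (r : ℝ) ≤ γ * m)
    (hd : 2 * d ≤ m) : (1 - 2 * γ) ^ d * binomLe m r ≤ binomLe (m - d) r := by
  induction d with
  | zero => simp
  | succ d ih =>
    obtain ⟨n, hn⟩ : ∃ n, m - d = n + 1 := ⟨m - d - 1, by omega⟩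
    have ih := ih (by omega)
    rw [hn] at ih
    rw [show m - (d + 1) = n by omega]
    have hmn : (m : ℝ) ≤ 2 * (n + 1) := by
      have : m ≤ 2 * (n + 1) := by omega
      exact_mod_cast this
    have hratio : (r : ℝ) / (n + 1) ≤ 2 * γ := by
      rw [div_le_iff₀ (by positivity)]
      have : 0 ≤ γ := by
        by_contra! hneg
        have hm : (0 : ℝ) < m := by exact_mod_cast (by omega : 0 < m)
        nlinarith [r.cast_nonneg (α := ℝ)]
      nlinarith
    calc (1 - 2 * γ) ^ (d + 1) * binomLe m r
        = (1 - 2 * γ) ^ d * binomLe m r * (1 - 2 * γ) := by ring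
      _ ≤ binomLe (n + 1) r * (1 - r / (n + 1)) := by
          gcongr
      _ ≤ binomLe n r := binomLe_succ_mul_le n r

lemma pow_mul_binomLe_le_add_one_pow {x : ℝ} (hx : 0 ≤ x) (hx1 : x ≤ 1) :
    x ^ r * binomLe m r ≤ (x + 1) ^ m := by
  calc x ^ r * binomLe m r = ∑ S : Finset (Fin m) with #S ≤ r, x ^ r := by
        rw [sum_const, nsmul_eq_mul, mul_comm, ← card_monIdx, Fintype.card_subtype]
    _ ≤ ∑ S : Finset (Fin m) with #S ≤ r, x ^ #S :=
        sum_le_sum fun S hS => pow_le_pow_of_le_one hx hx1 (mem_filter.mp hS).2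
    _ ≤ ∑ S : Finset (Fin m), x ^ #S := sum_le_univ_sum_of_nonneg fun S => by positivity
    _ = (x + 1) ^ m := by simpa using Fintype.sum_pow_mul_eq_add_pow (Fin m) x 1

lemma binomLe_le_exp {x : ℝ} (hx : 0 < x) (hx1 : x ≤ 1) :
    (binomLe m r : ℝ) ≤ Real.exp (r / x + x * m) := by
  have hinv : x⁻¹ ≤ Real.exp x⁻¹ := by linarith [Real.add_one_le_exp x⁻¹]
  calc (binomLe m r : ℝ) = x⁻¹ ^ r * (x ^ r * binomLe m r) := by
        rw [← mul_assoc, ← mul_pow, inv_mul_cancel₀ hx.ne', one_pow, one_mul]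
    _ ≤ Real.exp x⁻¹ ^ r * Real.exp x ^ m := by
        gcongr
        exact (pow_mul_binomLe_le_add_one_pow hx.le hx1).trans (by
          gcongr
          exact Real.add_one_le_exp x)
    _ = Real.exp (r / x + x * m) := by
        rw [← Real.exp_nat_mul, ← Real.exp_nat_mul, ← Real.exp_add, div_eq_mul_inv, mul_comm x]

end Binomial

section Moment

variable {m r j s K : ℕ} {F : Finset (polySpace m r)} {ε : ℝ}

lemma one_add_le_exp_of_le_inv_pow {β : ℝ} (h : β ≤ (64⁻¹) ^ j) (h1 : β ≤ 1 - 2⁻¹ ^ 47) :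
    1 + β ≤ Real.exp (2⁻¹ ^ j * (Real.log 2 - 2⁻¹ ^ 48)) := by
  rcases j with _ | j
  · calc 1 + β ≤ 2 * (-2⁻¹ ^ 48 + 1) := by linarith
      _ ≤ 2 * Real.exp (-2⁻¹ ^ 48) := by gcongr; exact Real.add_one_le_exp _
      _ = Real.exp (2⁻¹ ^ 0 * (Real.log 2 - 2⁻¹ ^ 48)) := by
          rw [pow_zero, one_mul, sub_eq_add_neg, Real.exp_add, Real.exp_log two_pos]
  · have hlog := Real.log_two_gt_d9
    calc 1 + β ≤ Real.exp β := by rw [add_comm]; exact Real.add_one_le_exp β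
      _ ≤ _ := Real.exp_le_exp.mpr (h.trans ?_)
    calc (64⁻¹ : ℝ) ^ (j + 1) = 2⁻¹ ^ (j + 1) * 32⁻¹ ^ (j + 1) := by rw [← mul_pow]; norm_num
      _ ≤ 2⁻¹ ^ (j + 1) * 32⁻¹ := by
          gcongr
          exact pow_le_of_le_one (by norm_num) (by norm_num) j.succ_ne_zero
      _ ≤ _ := by gcongr; norm_num at hlog ⊢; linarith

lemma inv_two_pow_mul_le_one_sub_pow (j : ℕ) :
    2⁻¹ ^ j * (1 - 2⁻¹ ^ 50) ≤ (1 - 2 * 2⁻¹ ^ 60 : ℝ) ^ (14 * j + 114) := by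
  rw [pow_add, pow_mul]
  gcongr <;> norm_num

-- With `β = 64⁻¹ ^ (j + 1)` and error density `δ = 2⁻¹ ^ (j + 51)`, the cube dimension
-- `d = 14 * j + 114` is the one solving `2 ^ d * δ ^ 2 * β ^ 2 = 1`.
lemma card_le_of_inv_pow_le_bias (h : ∀ f ∈ F, 64⁻¹ ^ (j + 1) ≤ bias f.1) :
    (#F : ℝ) ≤ (2 ^ m) ^ (14 * j + 114) *
      (2 ^ binomLe m r / 2 ^ binomLe (m - (14 * j + 114)) r) * 2 ^ m *
      Real.exp (2 * 2⁻¹ ^ (j + 51) * binomLe m r) := by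
  refine card_le_of_le_bias (β := 64⁻¹ ^ (j + 1)) (by positivity) (by positivity) ?_ h
  have hsixtyFour : (64⁻¹ : ℝ) = 2⁻¹ ^ 6 := by norm_num
  calc (1 : ℝ) = (2⁻¹ * 2) ^ (14 * j + 114) := by norm_num
    _ ≤ (2⁻¹ ^ (j + 51)) ^ 2 * (2 ^ (14 * j + 114) * (64⁻¹ ^ (j + 1)) ^ 2) := by
        rw [hsixtyFour, mul_pow, ← pow_mul, ← pow_mul, ← pow_mul]
        exact le_of_eq (by ring)

lemma two_pow_eq_exp (n : ℕ) : (2 : ℝ) ^ n = Real.exp (n * Real.log 2) := by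
  rw [Real.exp_nat_mul, Real.exp_log two_pos]

lemma sum_one_add_bias_pow_le_of_le_bias (hr : (r : ℝ) ≤ 2⁻¹ ^ 60 * m)
    (hj : 2 * (14 * j + 114) ≤ m) (hK : K ≤ binomLe m r)
    (hlow : ∀ f ∈ F, 64⁻¹ ^ (j + 1) ≤ bias f.1) (hup : ∀ f ∈ F, bias f.1 ≤ 64⁻¹ ^ j)
    (hup1 : ∀ f ∈ F, bias f.1 ≤ 1 - 2⁻¹ ^ 47) :
    ∑ f ∈ F, (1 + bias f.1) ^ K ≤ 2 ^ binomLe m r *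
      Real.exp (m * (14 * j + 115) - 2⁻¹ ^ (j + 49) * binomLe m r) := by
  set N := binomLe m r
  set N' := binomLe (m - (14 * j + 114)) r
  have hN' : 2⁻¹ ^ j * (1 - 2⁻¹ ^ 50) * (N : ℝ) ≤ N' :=
    (mul_le_mul_of_nonneg_right (inv_two_pow_mul_le_one_sub_pow j) N.cast_nonneg).trans
      (one_sub_pow_mul_binomLe_le (by norm_num) hr hj)
  have hterm : ∀ f ∈ F, (1 + bias f.1) ^ K ≤ Real.exp (2⁻¹ ^ j * (Real.log 2 - 2⁻¹ ^ 48)) ^ N := by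
    intro f hf
    have : 0 ≤ bias f.1 := le_trans (by positivity) (hlow f hf)
    calc (1 + bias f.1) ^ K ≤ (1 + bias f.1) ^ N := pow_le_pow_right₀ (by linarith) hK
      _ ≤ _ := by gcongr; exact one_add_le_exp_of_le_inv_pow (hup f hf) (hup1 f hf)
  have hexponent : (14 * j + 114) * (m * Real.log 2) + (N * Real.log 2 - N' * Real.log 2) +
      m * Real.log 2 + 2 * 2⁻¹ ^ (j + 51) * N + N * (2⁻¹ ^ j * (Real.log 2 - 2⁻¹ ^ 48)) ≤
      N * Real.log 2 + (m * (14 * j + 115) - 2⁻¹ ^ (j + 49) * N) := by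
    have hlog := Real.log_pos one_lt_two
    have hlog1 : Real.log 2 ≤ 1 := by linarith [Real.log_two_lt_d9]
    have hm : (m * (14 * j + 115) : ℝ) * Real.log 2 ≤ m * (14 * j + 115) :=
      mul_le_of_le_one_right (by positivity) hlog1
    have hN : (2⁻¹ ^ j * 2⁻¹ ^ 50 * N : ℝ) * Real.log 2 ≤ 2⁻¹ ^ j * 2⁻¹ ^ 50 * N :=
      mul_le_of_le_one_right (by positivity) hlog1
    have hNN' := mul_le_mul_of_nonneg_right hN' hlog.le
    rw [pow_add, pow_add]
    linarith
  calc ∑ f ∈ F, (1 + bias f.1) ^ K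
      ≤ #F * Real.exp (2⁻¹ ^ j * (Real.log 2 - 2⁻¹ ^ 48)) ^ N := by
        simpa using sum_le_card_nsmul F _ _ hterm
    _ ≤ (2 ^ m) ^ (14 * j + 114) * (2 ^ N / 2 ^ N') * 2 ^ m *
        Real.exp (2 * 2⁻¹ ^ (j + 51) * N) * Real.exp (2⁻¹ ^ j * (Real.log 2 - 2⁻¹ ^ 48)) ^ N := by
        gcongr
        exact card_le_of_inv_pow_le_bias hlow
    _ ≤ _ := by
        simp only [two_pow_eq_exp, ← Real.exp_nat_mul, ← Real.exp_add, ← Real.exp_sub,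
          Real.exp_le_exp]
        exact_mod_cast hexponent

lemma binomLe_sub_le (h : 257 * r ≤ m) (s : ℕ) :
    (binomLe m (r - s) : ℝ) ≤ 256⁻¹ ^ s * binomLe m r + 1 := by
  have hpow : (256 ^ s * binomLe m (r - s) : ℝ) ≤ binomLe m r + 256 ^ s := by
    exact_mod_cast pow_mul_binomLe_sub_le (c := 256) h s
  calc (binomLe m (r - s) : ℝ) = 256⁻¹ ^ s * (256 ^ s * binomLe m (r - s)) := by
        rw [← mul_assoc, ← mul_pow, inv_mul_cancel₀ (by norm_num), one_pow, one_mul]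
    _ ≤ 256⁻¹ ^ s * (binomLe m r + 256 ^ s) := by gcongr
    _ = 256⁻¹ ^ s * binomLe m r + 1 := by
        rw [mul_add, ← mul_pow, inv_mul_cancel₀ (by norm_num), one_pow]

lemma two_pow_le_exp (n : ℕ) : (2 : ℝ) ^ n ≤ Real.exp n := by
  rw [two_pow_eq_exp]
  gcongr
  exact mul_le_of_le_one_right n.cast_nonneg (by linarith [Real.log_two_lt_d9])

lemma card_le_of_prob_ne_zero_le_inv_pow (hr : 257 * r ≤ m)
    (h : ∀ f ∈ F, prob (fun x => f.1 x ≠ 0) ≤ 64⁻¹ ^ s) :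
    (#F : ℝ) ≤ Real.exp (m + 2 + 82 * 256⁻¹ ^ s * binomLe m r) := by
  have h256 : (256⁻¹ : ℝ) ^ s = (4⁻¹ ^ s) ^ 4 := by rw [pow_right_comm]; norm_num
  have h64 : (64⁻¹ : ℝ) ^ s = (4⁻¹ ^ s) ^ 3 := by rw [pow_right_comm]; norm_num
  have hcard := card_le_of_prob_ne_zero_sq_le (F := F) (u := 2 * 4⁻¹ ^ s) (by positivity) 4 s
    fun f hf => by
      have hw : 0 ≤ prob fun x => f.1 x ≠ 0 := prob_nonneg
      calc 3 * 4 ^ s * prob (fun x => f.1 x ≠ 0) ^ 2 ≤ 32 * 4 ^ s * ((4⁻¹ ^ s) ^ 3) ^ 2 := by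
            rw [← h64]
            gcongr
            · norm_num
            · exact h f hf
        _ = 32 * (4 * 4⁻¹) ^ s * (4⁻¹ ^ s) ^ 5 := by rw [mul_pow]; ring
        _ = (2 * 4⁻¹ ^ s) ^ (4 + 1) := by rw [mul_inv_cancel₀ four_ne_zero, one_pow]; ring
  have hfour : (4 : ℝ) ^ binomLe m (r - s) ≤ Real.exp (2 * (256⁻¹ ^ s * binomLe m r + 1)) := by
    calc (4 : ℝ) ^ binomLe m (r - s) = 2 ^ (2 * binomLe m (r - s)) := by rw [pow_mul]; norm_num
      _ ≤ Real.exp (2 * binomLe m (r - s)) := by exact_mod_cast two_pow_le_exp _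
      _ ≤ _ := by gcongr; exact binomLe_sub_le hr s
  calc (#F : ℝ) ≤ Real.exp (2 * (256⁻¹ ^ s * binomLe m r + 1)) * Real.exp m *
        Real.exp ((4 + 1) * (2 * 4⁻¹ ^ s) ^ 4 * binomLe m r) := by
        refine hcard.trans ?_
        push_cast
        gcongr
        exact two_pow_le_exp m
    _ = _ := by
        rw [← Real.exp_add, ← Real.exp_add, h256]
        ring_nf

lemma sum_one_add_bias_pow_le_of_le_prob_ne_zero (hs : 8 ≤ s) (hr : 257 * r ≤ m)
    (hK : K ≤ binomLe m r) (hlow : ∀ f ∈ F, 64⁻¹ ^ (s + 1) ≤ prob fun x => f.1 x ≠ 0)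
    (hup : ∀ f ∈ F, prob (fun x => f.1 x ≠ 0) ≤ 64⁻¹ ^ s) :
    ∑ f ∈ F, (1 + bias f.1) ^ K ≤
      2 ^ binomLe m r * Real.exp (m + 2 - 2⁻¹ ^ 7 * 64⁻¹ ^ s * binomLe m r) := by
  set N := binomLe m r
  have hterm : ∀ f ∈ F, (1 + bias f.1) ^ K ≤ (2 * Real.exp (-64⁻¹ ^ (s + 1))) ^ N := by
    intro f hf
    have hhalf : (64⁻¹ : ℝ) ^ s ≤ 2⁻¹ :=
      (pow_le_of_le_one (by norm_num) (by norm_num) (by omega)).trans (by norm_num)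
    have hexp := Real.add_one_le_exp (-64⁻¹ ^ (s + 1) : ℝ)
    have hw := hlow f hf
    have hw' := (hup f hf).trans hhalf
    rw [bias_eq_one_sub]
    calc _ ≤ (1 + (1 - 2 * prob fun x => f.1 x ≠ 0)) ^ N := pow_le_pow_right₀ (by linarith) hK
      _ ≤ _ := pow_le_pow_left₀ (by linarith) (by linarith) N
  have hdom : 82 * (256⁻¹ : ℝ) ^ s ≤ (64⁻¹ - 2⁻¹ ^ 7) * 64⁻¹ ^ s := by
    calc 82 * (256⁻¹ : ℝ) ^ s = 82 * (4⁻¹ ^ s * 64⁻¹ ^ s) := by rw [← mul_pow]; norm_num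
      _ ≤ 82 * (4⁻¹ ^ 8 * 64⁻¹ ^ s) := by
          gcongr ?_ * (?_ * ?_)
          exact pow_le_pow_of_le_one (by norm_num) (by norm_num) hs
      _ ≤ _ := by
          rw [← mul_assoc]
          gcongr
          norm_num
  calc ∑ f ∈ F, (1 + bias f.1) ^ K
      ≤ #F * (2 * Real.exp (-64⁻¹ ^ (s + 1))) ^ N := by
        simpa using sum_le_card_nsmul F _ _ hterm
    _ ≤ Real.exp (m + 2 + (64⁻¹ - 2⁻¹ ^ 7) * 64⁻¹ ^ s * N) *
        (2 * Real.exp (-64⁻¹ ^ (s + 1))) ^ N := by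
        gcongr
        exact (card_le_of_prob_ne_zero_le_inv_pow hr hup).trans (by gcongr)
    _ = _ := by
        rw [mul_pow, ← Real.exp_nat_mul, mul_left_comm, ← Real.exp_add]
        ring_nf

lemma sum_one_add_bias_pow_le_of_prob_ne_zero_le {u : ℝ} (hu : 0 < u) (huε : 8 * u ≤ ε)
    (hK : (K : ℝ) ≤ (1 - ε) * binomLe m r) (h : ∀ f ∈ F, prob (fun x => f.1 x ≠ 0) ≤ u ^ 2) :
    ∑ f ∈ F, (1 + bias f.1) ^ K ≤
      2 ^ binomLe m r * Real.exp (m - ε / 4 * binomLe m r) := by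
  set N := binomLe m r
  have hterm : ∀ f ∈ F, (1 + bias f.1) ^ K ≤ 2 ^ K := fun f _ =>
    pow_le_pow_left₀ (one_add_bias_nonneg f.1) (by linarith [bias_le_one f.1]) K
  have hexponent : m * Real.log 2 + (1 + 1) * u * N + K * Real.log 2 ≤
      N * Real.log 2 + (m - ε / 4 * N) := by
    have hlog := Real.log_two_gt_d9
    have hlog1 : Real.log 2 ≤ 1 := by linarith [Real.log_two_lt_d9]
    have hm : m * Real.log 2 ≤ m := mul_le_of_le_one_right m.cast_nonneg hlog1
    have hKN := mul_le_mul_of_nonneg_right hK (by linarith : 0 ≤ Real.log 2)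
    have hεN : 2⁻¹ * (ε * N) ≤ Real.log 2 * (ε * N) := by
      have : 0 ≤ ε := by linarith
      gcongr
      linarith
    have huN : 8 * u * N ≤ ε * N := by gcongr
    linarith
  calc ∑ f ∈ F, (1 + bias f.1) ^ K ≤ #F * 2 ^ K := by simpa using sum_le_card_nsmul F _ _ hterm
    _ ≤ 2 ^ m * Real.exp ((1 + 1) * u * N) * 2 ^ K := by
        gcongr
        simpa using card_le_of_prob_ne_zero_le hu 1 h
    _ ≤ _ := by
        simp only [two_pow_eq_exp, ← Real.exp_add]
        exact Real.exp_le_exp.mpr hexponent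

lemma sum_one_add_bias_pow_le_of_bias_le {τ : ℝ} (h : ∀ f ∈ F, bias f.1 ≤ τ) :
    ∑ f ∈ F, (1 + bias f.1) ^ K ≤ 2 ^ binomLe m r * Real.exp (K * τ) := by
  have hterm : ∀ f ∈ F, (1 + bias f.1) ^ K ≤ Real.exp (K * τ) := fun f hf => by
    rw [Real.exp_nat_mul]
    refine pow_le_pow_left₀ (one_add_bias_nonneg f.1) ?_ K
    linarith [h f hf, Real.add_one_le_exp τ]
  calc ∑ f ∈ F, (1 + bias f.1) ^ K ≤ #F * Real.exp (K * τ) := by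
        simpa using sum_le_card_nsmul F _ _ hterm
    _ ≤ _ := by
        gcongr
        exact_mod_cast (card_le_univ F).trans_eq card_polySpace

end Moment

section MomentRanges

variable {m r K : ℕ} {F : Finset (polySpace m r)} {ε q : ℝ}

lemma sum_le_card_mul_of_forall_exists {ι α : Type*} {I : Finset ι} {S : Finset α}
    {P : ι → α → Prop} {g : α → ℝ} {B : ℝ} (hg : ∀ a, 0 ≤ g a)
    (hcover : ∀ a ∈ S, ∃ i ∈ I, P i a)
    (h : ∀ i ∈ I, ∀ T ⊆ S, (∀ a ∈ T, P i a) → ∑ a ∈ T, g a ≤ B) : ∑ a ∈ S, g a ≤ #I * B := by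
  classical
  calc ∑ a ∈ S, g a ≤ ∑ a ∈ S, ∑ i ∈ I, if P i a then g a else 0 := by
        refine sum_le_sum fun a ha => ?_
        obtain ⟨i, hi, hP⟩ := hcover a ha
        calc g a = if P i a then g a else 0 := (if_pos hP).symm
          _ ≤ _ := single_le_sum (f := fun i => if P i a then g a else 0)
            (fun i _ => by split_ifs; exacts [hg a, le_rfl]) hi
    _ = ∑ i ∈ I, ∑ a ∈ S with P i a, g a := by
        rw [sum_comm]
        simp only [sum_filter]
    _ ≤ #I * B := by
        rw [← nsmul_eq_mul]
        exact sum_le_card_nsmul I _ _ fun i hi =>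
          h i hi _ (filter_subset _ _) fun a ha => (mem_filter.mp ha).2

lemma exists_two_pow_le_and_inv_pow_near {β : ℝ} (hq : 0 < q) (hβ : q⁻¹ ^ 6 < β) (hβ1 : β ≤ 1) :
    ∃ j : ℕ, 2 ^ j ≤ q ∧ 64⁻¹ ^ (j + 1) ≤ β ∧ β ≤ 64⁻¹ ^ j := by
  obtain ⟨j, hj, hj'⟩ := exists_nat_pow_near_of_lt_one (y := (64⁻¹ : ℝ))
    (lt_trans (by positivity) hβ) hβ1 (by norm_num) (by norm_num)
  refine ⟨j, ?_, hj.le, hj'⟩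
  have hpow : q⁻¹ ^ 6 ≤ (2⁻¹ ^ j) ^ 6 := by
    calc q⁻¹ ^ 6 ≤ 64⁻¹ ^ j := hβ.le.trans hj'
      _ = _ := by rw [pow_right_comm]; norm_num
  have hinv := le_of_pow_le_pow_left₀ (by norm_num) (by positivity) hpow
  rwa [inv_pow, inv_le_inv₀ hq (by positivity)] at hinv

lemma two_mul_le_of_two_pow_le_exp {j : ℕ} (hm : 1000 ≤ m) (h : (2 : ℝ) ^ j ≤ Real.exp (m / 64)) :
    2 * (14 * j + 114) ≤ m := by
  rw [two_pow_eq_exp, Real.exp_le_exp] at h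
  have hlog : (j : ℝ) * 0.6931471803 ≤ j * Real.log 2 := by
    gcongr
    exact Real.log_two_gt_d9.le
  have hm' : (1000 : ℝ) ≤ m := by exact_mod_cast hm
  have : 2 * (14 * j + 114 : ℝ) ≤ m := by linarith
  exact_mod_cast this

lemma card_filter_two_pow_le (hq : 0 ≤ q) :
    (#{j ∈ range (⌊q⌋₊ + 1) | 2 ^ j ≤ q} : ℝ) ≤ q + 1 := by
  have hcard := card_filter_le (range (⌊q⌋₊ + 1)) fun j => 2 ^ j ≤ q
  rw [card_range] at hcard
  calc (#{j ∈ range (⌊q⌋₊ + 1) | 2 ^ j ≤ q} : ℝ) ≤ ⌊q⌋₊ + 1 := by exact_mod_cast hcard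
    _ ≤ q + 1 := by gcongr; exact Nat.floor_le hq

lemma sum_one_add_bias_pow_le_of_inv_pow_lt_bias (hr : (r : ℝ) ≤ 2⁻¹ ^ 60 * m) (hm : 1000 ≤ m)
    (hq : 0 < q) (hqm : q ≤ Real.exp (m / 64)) (hK : K ≤ binomLe m r)
    (hlow : ∀ f ∈ F, q⁻¹ ^ 6 < bias f.1) (hup : ∀ f ∈ F, bias f.1 ≤ 1 - 2⁻¹ ^ 47) :
    ∑ f ∈ F, (1 + bias f.1) ^ K ≤ (q + 1) *
      (2 ^ binomLe m r * Real.exp (m * (14 * q + 115) - 2⁻¹ ^ 49 * binomLe m r / q)) := by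
  have hnonneg (f : polySpace m r) : 0 ≤ (1 + bias f.1) ^ K :=
    pow_nonneg (one_add_bias_nonneg f.1) K
  have hle {j : ℕ} (hj : (2 : ℝ) ^ j ≤ q) : (j : ℝ) ≤ q :=
    le_trans (by exact_mod_cast j.lt_two_pow_self.le) hj
  have hcover : ∀ f ∈ F, ∃ j ∈ ({j ∈ range (⌊q⌋₊ + 1) | 2 ^ j ≤ q} : Finset ℕ),
      64⁻¹ ^ (j + 1) ≤ bias f.1 ∧ bias f.1 ≤ 64⁻¹ ^ j := by
    intro f hf
    obtain ⟨j, hjq, hj⟩ := exists_two_pow_le_and_inv_pow_near hq (hlow f hf) (bias_le_one f.1)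
    exact ⟨j, mem_filter.mpr ⟨mem_range_succ_iff.mpr (Nat.le_floor (hle hjq)), hjq⟩, hj⟩
  refine (sum_le_card_mul_of_forall_exists hnonneg hcover fun j hj T hT hbias => ?_).trans
    (mul_le_mul_of_nonneg_right (card_filter_two_pow_le hq.le) (by positivity))
  have hjq : (2 : ℝ) ^ j ≤ q := (mem_filter.mp hj).2
  refine (sum_one_add_bias_pow_le_of_le_bias hr (two_mul_le_of_two_pow_le_exp hm
    (hjq.trans hqm)) hK (fun f hf => (hbias f hf).1) (fun f hf => (hbias f hf).2)
    fun f hf => hup f (hT hf)).trans ?_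
  have hinv : q⁻¹ ≤ 2⁻¹ ^ j := by
    rw [inv_pow]
    exact inv_anti₀ (by positivity) hjq
  rw [pow_add, mul_comm (2⁻¹ ^ j : ℝ), mul_div_right_comm, div_eq_mul_inv]
  gcongr
  · exact hle hjq

lemma sum_one_add_bias_pow_le_of_inv_pow_lt_prob_ne_zero {t : ℕ} (hr : 257 * r ≤ m)
    (hK : K ≤ binomLe m r) (hlow : ∀ f ∈ F, 64⁻¹ ^ t < prob fun x => f.1 x ≠ 0)
    (hup : ∀ f ∈ F, prob (fun x => f.1 x ≠ 0) ≤ 64⁻¹ ^ 8) :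
    ∑ f ∈ F, (1 + bias f.1) ^ K ≤ t * (2 ^ binomLe m r *
      Real.exp (m + 2 - 2⁻¹ ^ 7 * 64⁻¹ ^ t * binomLe m r)) := by
  have hnonneg (f : polySpace m r) : 0 ≤ (1 + bias f.1) ^ K :=
    pow_nonneg (one_add_bias_nonneg f.1) K
  have hcover : ∀ f ∈ F, ∃ s ∈ Ico 8 t, 64⁻¹ ^ (s + 1) ≤ (prob fun x => f.1 x ≠ 0) ∧
      prob (fun x => f.1 x ≠ 0) ≤ 64⁻¹ ^ s := by
    intro f hf
    obtain ⟨s, hs, hs'⟩ := exists_nat_pow_near_of_lt_one (y := (64⁻¹ : ℝ))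
      (lt_trans (by positivity) (hlow f hf)) ((hup f hf).trans (by norm_num)) (by norm_num)
      (by norm_num)
    have hmono : StrictAnti fun n : ℕ => (64⁻¹ : ℝ) ^ n :=
      pow_right_strictAnti₀ (by norm_num) (by norm_num)
    have hs8 : 8 < s + 1 := hmono.lt_iff_gt.mp (hs.trans_le (hup f hf))
    have hst : s < t := hmono.lt_iff_gt.mp ((hlow f hf).trans_le hs')
    exact ⟨s, mem_Ico.mpr ⟨Nat.le_of_lt_succ hs8, hst⟩, hs.le, hs'⟩
  have hcard : (#(Ico 8 t) : ℝ) ≤ t := by simp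
  refine (sum_le_card_mul_of_forall_exists hnonneg hcover fun s hs T _ hw => ?_).trans
    (mul_le_mul_of_nonneg_right hcard (by positivity))
  obtain ⟨hs8, hst⟩ := mem_Ico.mp hs
  refine (sum_one_add_bias_pow_le_of_le_prob_ne_zero hs8 hr hK (fun f hf => (hw f hf).1)
    fun f hf => (hw f hf).2).trans ?_
  have hpow : (64⁻¹ : ℝ) ^ t ≤ 64⁻¹ ^ s :=
    pow_le_pow_of_le_one (by norm_num) (by norm_num) hst.le
  gcongr

lemma le_of_cast_le_one_sub_mul {N : ℕ} (hε : 0 ≤ ε) (h : (K : ℝ) ≤ (1 - ε) * N) : K ≤ N := by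
  have hN : (1 - ε) * N ≤ N := mul_le_of_le_one_left N.cast_nonneg (sub_le_self 1 hε)
  exact_mod_cast h.trans hN

lemma sum_one_add_bias_pow_le_of_prob_ne_zero_le_inv_pow {t : ℕ} {κ : ℝ} (hr : 257 * r ≤ m)
    (ht : 8 * 8⁻¹ ^ t ≤ ε) (hK : (K : ℝ) ≤ (1 - ε) * binomLe m r)
    (hκt : κ ≤ 2⁻¹ ^ 7 * 64⁻¹ ^ t) (hκε : κ ≤ ε / 4)
    (h : ∀ f ∈ F, prob (fun x => f.1 x ≠ 0) ≤ 64⁻¹ ^ 8) :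
    ∑ f ∈ F, (1 + bias f.1) ^ K ≤
      (t + 1) * (2 ^ binomLe m r * Real.exp (m + 2 - κ * binomLe m r)) := by
  classical
  have hKN := le_of_cast_le_one_sub_mul (le_trans (by positivity) ht) hK
  rw [← sum_filter_not_add_sum_filter F fun f => prob (fun x => f.1 x ≠ 0) ≤ 64⁻¹ ^ t, add_mul,
    one_mul]
  refine add_le_add ?_ ?_
  · refine (sum_one_add_bias_pow_le_of_inv_pow_lt_prob_ne_zero (t := t) hr hKN
      (fun f hf => not_le.mp (mem_filter.mp hf).2) fun f hf => h f (mem_filter.mp hf).1).trans ?_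
    gcongr
  · have hpow : ((8⁻¹ : ℝ) ^ t) ^ 2 = 64⁻¹ ^ t := by rw [pow_right_comm]; norm_num
    refine (sum_one_add_bias_pow_le_of_prob_ne_zero_le (by positivity) ht hK fun f hf =>
      (mem_filter.mp hf).2.trans_eq hpow.symm).trans ?_
    have hm : (m : ℝ) ≤ m + 2 := by linarith
    gcongr

lemma sum_one_add_bias_pow_le_of_inv_pow_lt {t : ℕ} {κ : ℝ} (hr : (r : ℝ) ≤ 2⁻¹ ^ 60 * m)
    (hm : 1000 ≤ m) (hq : 1 ≤ q) (hqm : q ≤ Real.exp (m / 64)) (ht : 8 * 8⁻¹ ^ t ≤ ε)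
    (hK : (K : ℝ) ≤ (1 - ε) * binomLe m r) (hκ : 0 ≤ κ) (hκ1 : κ ≤ 2⁻¹ ^ 49)
    (hκt : κ ≤ 2⁻¹ ^ 7 * 64⁻¹ ^ t) (hκε : κ ≤ ε / 4) (h : ∀ f ∈ F, q⁻¹ ^ 6 < bias f.1) :
    ∑ f ∈ F, (1 + bias f.1) ^ K ≤ (q + (t + 2)) *
      (2 ^ binomLe m r * Real.exp (m * (14 * q + 115) - κ * binomLe m r / q)) := by
  classical
  have hKN := le_of_cast_le_one_sub_mul (le_trans (by positivity) ht) hK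
  rw [← sum_filter_not_add_sum_filter F fun f => prob (fun x => f.1 x ≠ 0) ≤ 64⁻¹ ^ 8,
    show q + (t + 2) = q + 1 + (t + 1) by ring, add_mul]
  refine add_le_add ?_ ?_
  · refine (sum_one_add_bias_pow_le_of_inv_pow_lt_bias hr hm (by positivity) hqm hKN
      (fun f hf => h f (mem_filter.mp hf).1) fun f hf => ?_).trans ?_
    · have hw := not_le.mp (mem_filter.mp hf).2
      rw [bias_eq_one_sub]
      norm_num at hw ⊢
      linarith
    · gcongr
  · have hrm : 257 * r ≤ m := by
      have : (257 * r : ℝ) ≤ m := by linarith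
      exact_mod_cast this
    have hm2 : (m : ℝ) + 2 ≤ m * (14 * q + 115) := by
      have hm' : (1000 : ℝ) ≤ m := by exact_mod_cast hm
      have := mul_le_mul_of_nonneg_left hq m.cast_nonneg (α := ℝ)
      linarith
    refine (sum_one_add_bias_pow_le_of_prob_ne_zero_le_inv_pow hrm ht hK hκt hκε fun f hf =>
      (mem_filter.mp hf).2).trans ?_
    gcongr
    exact div_le_self (by positivity) hq

end MomentRanges

section LinearPolynomials

open Filter

lemma bias_eq_zero_of_derivative_eq_one {G : Type*} [AddGroup G] [Fintype G] {f : G → ZMod 2}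
    {w : G} (h : ∀ x, f (x + w) - f x = 1) : bias f = 0 := by
  have hneg : -bias f = bias f := by
    calc -bias f = 𝔼 x, signChar (f (x + w)) := by
          rw [bias, ← expect_neg_distrib]
          refine expect_congr rfl fun x _ => ?_
          rw [sub_eq_iff_eq_add.mp (h x), AddChar.map_add_eq_mul, signChar_one, neg_one_mul]
      _ = bias f := Fintype.expect_equiv (Equiv.addRight w) _ _ fun _ => rfl
  linarith

lemma eq_of_mem_polySpace_zero {m : ℕ} {f : (Fin m → ZMod 2) → ZMod 2} (hf : f ∈ polySpace m 0)
    (x y : Fin m → ZMod 2) : f x = f y := by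
  suffices polySpace m 0 ≤ LinearMap.eqLocus (LinearMap.proj x) (LinearMap.proj y) from this hf
  refine polySpace_le fun S hS => ?_
  simp [card_eq_zero.mp (Nat.le_zero.mp hS)]

lemma bias_nonpos_of_mem_polySpace_one {m : ℕ} {f : (Fin m → ZMod 2) → ZMod 2}
    (hf : f ∈ polySpace m 1) (hf0 : f ≠ 0) : bias f ≤ 0 := by
  by_cases h : ∃ w, f (0 + w) - f 0 ≠ 0
  · obtain ⟨w, hw⟩ := h
    refine (bias_eq_zero_of_derivative_eq_one (w := w) fun x => ?_).le
    rw [← zmod_two_eq_one_of_ne_zero hw]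
    exact eq_of_mem_polySpace_zero (derivative_mem_polySpace hf w) x 0
  · have hconst : f = fun _ => f 0 := by
      ext x
      push Not at h
      simpa [sub_eq_zero] using h x
    have h0 : f 0 = 1 := zmod_two_eq_one_of_ne_zero fun h0 => hf0 (by rw [hconst, h0]; rfl)
    rw [hconst, h0, bias, Fintype.expect_const, signChar_one]
    norm_num

lemma eventually_sum_one_add_bias_pow_linear_le {ε ρ : ℝ} (hε : 0 < ε) (hρ : 0 < ρ) :
    ∀ᶠ m : ℕ in atTop, ∀ K : ℕ, (K : ℝ) ≤ (1 - ε) * binomLe m 1 →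
      ∑ f : polySpace m 1, (1 + bias f.1) ^ K ≤ (1 + ρ) * 2 ^ binomLe m 1 := by
  have hlog := Real.log_pos one_lt_two
  filter_upwards [tendsto_natCast_atTop_atTop.eventually_ge_atTop (-Real.log ρ / (ε * Real.log 2))]
    with m hm K hK
  have hpow : (2 : ℝ) ^ K ≤ ρ * 2 ^ binomLe m 1 := by
    have hmN : (m : ℝ) ≤ binomLe m 1 := by exact_mod_cast (lt_binomLe le_rfl).le
    rw [div_le_iff₀ (by positivity)] at hm
    rw [two_pow_eq_exp, two_pow_eq_exp, ← Real.exp_log hρ, ← Real.exp_add, Real.exp_le_exp]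
    have hKlog := mul_le_mul_of_nonneg_right hK hlog.le
    have hmNlog := mul_le_mul_of_nonneg_right hmN (mul_pos hε hlog).le
    linarith
  classical
  rw [← add_sum_erase univ _ (mem_univ 0), add_comm, add_mul, one_mul]
  refine add_le_add ?_ (le_trans ?_ hpow)
  · refine (sum_one_add_bias_pow_le_of_bias_le (τ := 0) fun f hf => ?_).trans_eq (by simp)
    refine bias_nonpos_of_mem_polySpace_one f.2 fun h => ?_
    exact (mem_erase.mp hf).1 (Submodule.coe_eq_zero.mp h)
  · refine pow_le_pow_left₀ (one_add_bias_nonneg _) ?_ K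
    linarith [bias_le_one (0 : polySpace m 1).1]

end LinearPolynomials

section FullMoment

open Filter Topology

lemma eventually_add_mul_exp_le {a b c δ : ℝ} (hc : 0 < c) (hδ : 0 < δ) :
    ∀ᶠ q : ℝ in atTop, (q + b) * Real.exp (a * q ^ 4 - c * q ^ 5) ≤ δ := by
  have hlim : Tendsto (fun q : ℝ => (q + b) * Real.exp (-q)) atTop (𝓝 0) := by
    have h1 := Real.tendsto_pow_mul_exp_neg_atTop_nhds_zero 1
    have h0 := (Real.tendsto_pow_mul_exp_neg_atTop_nhds_zero 0).const_mul b
    simpa [add_mul] using h1.add h0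
  filter_upwards [hlim.eventually_le_const hδ, eventually_ge_atTop 1, eventually_ge_atTop (-b),
    eventually_ge_atTop ((a + 1) / c)] with q hq hq1 hqb hqc
  refine le_trans ?_ hq
  have hexponent : a * q ^ 4 - c * q ^ 5 ≤ -q := by
    rw [div_le_iff₀ hc] at hqc
    calc a * q ^ 4 - c * q ^ 5 = -((q * c - a) * q ^ 4) := by ring
      _ ≤ -(1 * q) := by
          have hqa : 1 ≤ q * c - a := by linarith
          have hq4 : q ≤ q ^ 4 := le_self_pow₀ hq1 four_ne_zero
          gcongr
      _ = -q := by rw [one_mul]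
  have : 0 ≤ q + b := by linarith
  gcongr

-- `q⁻¹ ^ 6 = ρ / (4 * binomLe m r)` is the bias below which a polynomial is harmless; the power `6`
-- matches the dyadic scales `64⁻¹ ^ j = (2⁻¹ ^ j) ^ 6` of the bias.
lemma exists_bias_scale {m r : ℕ} {ρ Q : ℝ} (hρ : 0 < ρ) (hρ1 : ρ ≤ 1) (hr2 : 2 ≤ r)
    (hr : (r : ℝ) ≤ 2⁻¹ ^ 60 * m) (hρm : 16 * Real.log (4 / ρ) ≤ m) (hQm : Q ^ 6 ≤ m) :
    ∃ q ≥ Q, ρ * q ^ 6 = 4 * binomLe m r ∧ m ≤ q ^ 3 ∧ q ≤ Real.exp (m / 64) := by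
  have hmN : (m : ℝ) ≤ binomLe m r := by exact_mod_cast (lt_binomLe (by omega)).le
  obtain ⟨q, hq, hq6⟩ : ∃ q : ℝ, 0 ≤ q ∧ q ^ 6 = 4 * binomLe m r / ρ :=
    ⟨_, by positivity, Real.rpow_inv_natCast_pow (by positivity) (by norm_num)⟩
  have hρq : ρ * q ^ 6 = 4 * binomLe m r := by
    rw [hq6]
    field_simp
  have hqN : 4 * (binomLe m r : ℝ) ≤ q ^ 6 := hρq ▸ mul_le_of_le_one_left (by positivity) hρ1
  refine ⟨q, ?_, hρq, ?_, ?_⟩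
  · exact le_of_pow_le_pow_left₀ (by norm_num : 6 ≠ 0) hq (by linarith)
  · refine le_of_pow_le_pow_left₀ two_ne_zero (by positivity) ?_
    have hsq : (m ^ 2 : ℝ) ≤ 4 * binomLe m r := by exact_mod_cast sq_le_four_mul_binomLe hr2
    calc (m ^ 2 : ℝ) ≤ q ^ 6 := hsq.trans hqN
      _ = (q ^ 3) ^ 2 := by rw [← pow_mul]
  · refine le_of_pow_le_pow_left₀ (by norm_num : 6 ≠ 0) (by positivity) ?_
    have hN := binomLe_le_exp (m := m) (r := r) (x := 64⁻¹) (by norm_num) (by norm_num)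
    calc q ^ 6 = 4 / ρ * binomLe m r := by rw [hq6]; ring
      _ ≤ Real.exp (m / 16) * Real.exp (m / 32) := by
          gcongr
          · rw [← Real.log_le_iff_le_exp (by positivity)]
            linarith
          · refine hN.trans (Real.exp_le_exp.mpr ?_)
            rw [div_inv_eq_mul]
            linarith
      _ = Real.exp (m / 64) ^ 6 := by
          rw [← Real.exp_add, ← Real.exp_nat_mul]
          ring_nf

lemma exp_quarter_le {ρ : ℝ} (hρ : 0 ≤ ρ) (hρ1 : ρ ≤ 1) : Real.exp (ρ / 4) ≤ 1 + ρ / 2 := by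
  have h := le_of_abs_le (Real.abs_exp_sub_one_le (x := ρ / 4) (by rw [abs_of_nonneg] <;> linarith))
  rw [abs_of_nonneg (by linarith)] at h
  linarith

lemma exists_weight_threshold {ε : ℝ} (hε : 0 < ε) : ∃ (t : ℕ) (κ : ℝ), 0 < κ ∧ 8 * 8⁻¹ ^ t ≤ ε ∧
    κ ≤ 2⁻¹ ^ 49 ∧ κ ≤ 2⁻¹ ^ 7 * 64⁻¹ ^ t ∧ κ ≤ ε / 4 := by
  obtain ⟨t, ht⟩ := exists_pow_lt_of_lt_one (div_pos hε (by norm_num : (0 : ℝ) < 8))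
    (by norm_num : (8⁻¹ : ℝ) < 1)
  refine ⟨t, min (2⁻¹ ^ 49) (min (2⁻¹ ^ 7 * 64⁻¹ ^ t) (ε / 4)), by positivity, by linarith, ?_⟩
  rw [← le_min_iff, ← le_min_iff]

lemma mul_sub_div_le_of_scale {m N κ ρ q : ℝ} (hq : 1 ≤ q) (hρq : ρ * q ^ 6 = 4 * N)
    (hmq : m ≤ q ^ 3) :
    m * (14 * q + 115) - κ * N / q ≤ 129 * q ^ 4 - κ * ρ / 4 * q ^ 5 := by
  have hN : κ * N / q = κ * ρ / 4 * q ^ 5 := by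
    rw [div_eq_iff (by positivity)]
    linear_combination -κ / 4 * hρq
  have hm : m * (14 * q + 115) ≤ 129 * q ^ 4 := by
    calc m * (14 * q + 115) ≤ q ^ 3 * (129 * q) := by gcongr; linarith
      _ = 129 * q ^ 4 := by ring
  linarith

lemma eventually_sum_one_add_bias_pow_le {ε ρ : ℝ} (hε : 0 < ε) (hρ : 0 < ρ) (hρ1 : ρ ≤ 1) :
    ∀ᶠ m : ℕ in atTop, ∀ r : ℕ, 2 ≤ r → (r : ℝ) ≤ 2⁻¹ ^ 60 * m →
      ∀ K : ℕ, (K : ℝ) ≤ (1 - ε) * binomLe m r →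
        ∑ f : polySpace m r, (1 + bias f.1) ^ K ≤ (1 + ρ) * 2 ^ binomLe m r := by
  obtain ⟨t, κ, hκ, ht, hκ1, hκt, hκε⟩ := exists_weight_threshold hε
  obtain ⟨Q, hQ1, hQ⟩ := ((eventually_ge_atTop 1).and (eventually_forall_ge_atTop.mpr
    (eventually_add_mul_exp_le (a := 129) (b := t + 2) (c := κ * ρ / 4) (by positivity)
      (half_pos hρ)))).exists
  filter_upwards [eventually_ge_atTop 1000, tendsto_natCast_atTop_atTop.eventually_ge_atTop (Q ^ 6),
    tendsto_natCast_atTop_atTop.eventually_ge_atTop (16 * Real.log (4 / ρ))]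
    with m hm hmQ hmρ r hr2 hr K hK
  obtain ⟨q, hqQ, hρq, hmq, hqm⟩ := exists_bias_scale hρ hρ1 hr2 hr hmρ hmQ
  have hq1 : 1 ≤ q := hQ1.trans hqQ
  set N := binomLe m r
  classical
  rw [← sum_filter_add_sum_filter_not univ fun f : polySpace m r => bias f.1 ≤ q⁻¹ ^ 6,
    show (1 + ρ) * 2 ^ N = 2 ^ N * (1 + ρ / 2) + ρ / 2 * 2 ^ N by ring]
  refine add_le_add ?_ ?_
  · refine (sum_one_add_bias_pow_le_of_bias_le fun f hf => (mem_filter.mp hf).2).trans ?_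
    gcongr
    calc Real.exp (K * q⁻¹ ^ 6) ≤ Real.exp (N * q⁻¹ ^ 6) := by
          gcongr
          exact le_of_cast_le_one_sub_mul hε.le hK
      _ = Real.exp (ρ / 4) := by
          congr 1
          field_simp
          linarith
      _ ≤ 1 + ρ / 2 := exp_quarter_le hρ.le hρ1
  · refine (sum_one_add_bias_pow_le_of_inv_pow_lt hr hm hq1 hqm ht hK hκ.le hκ1 hκt hκε
      fun f hf => not_le.mp (mem_filter.mp hf).2).trans ?_
    calc (q + (t + 2)) * (2 ^ N * Real.exp (m * (14 * q + 115) - κ * N / q))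
        ≤ (q + (t + 2)) * (2 ^ N * Real.exp (129 * q ^ 4 - κ * ρ / 4 * q ^ 5)) := by
          gcongr _ * (_ * Real.exp ?_)
          exact mul_sub_div_le_of_scale hq1 hρq hmq
      _ = (q + (t + 2)) * Real.exp (129 * q ^ 4 - κ * ρ / 4 * q ^ 5) * 2 ^ N := by ring
      _ ≤ ρ / 2 * 2 ^ N := by
          gcongr
          exact hQ q hqQ

end FullMoment

section LinearIndependence

variable {m r K : ℕ} {ρ : ℝ}

lemma card_linearIndependent_monVec_ge
    (h : ∑ f : polySpace m r, (1 + bias f.1) ^ K ≤ (1 + ρ) * 2 ^ binomLe m r) :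
    (1 - ρ) * Nat.card {Z : Finset (Fin m → ZMod 2) // #Z = K} ≤
      Nat.card {Z : Finset (Fin m → ZMod 2) //
        #Z = K ∧ LinearIndependent (ZMod 2) fun z : {x // x ∈ Z} => monVec m r z.1} := by
  classical
  refine (card_linearIndependent_ge_of_moment_le (polyEval m r) ?_).trans ?_
  · simpa [card_polySpace, polyEval_apply, ← one_add_bias] using h
  · refine Nat.cast_le.mpr (Nat.card_le_card_of_injective
      (Subtype.map id fun Z => And.imp_right ?_) (Subtype.map_injective _ Function.injective_id))
    exact linearIndependent_monVec_of_polyEval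

end LinearIndependence

end RandomEvaluation

/-- linear independence of evaluation vectors of a random set.
There is an absolute constant `γ₀ > 0` such that for every `ε ∈ (0,1)` and `ρ > 0`
there is `m₀` such that for all `m ≥ m₀` and `1 ≤ r ≤ γ₀ m`, setting
`K = ⌊(1-ε)·binom(m,≤r)⌋`, a uniformly random `K`-element subset
`Z = {z₁,…,z_K} ⊆ F₂^m` satisfies, with probability at least `1 - ρ`, that the
evaluation vectors `z^{(r)}`, `z ∈ Z`, are linearly independent over `F₂`. -/
theorem random_evaluation_vectors_linearIndependent :
    ∃ γ₀ : ℝ, 0 < γ₀ ∧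
      ∀ ε : ℝ, 0 < ε → ε < 1 →
        ∀ ρ : ℝ, 0 < ρ →
          ∃ m₀ : ℕ, ∀ m : ℕ, m₀ ≤ m →
            ∀ r : ℕ, 1 ≤ r → (r : ℝ) ≤ γ₀ * m →
              ∀ K : ℕ, K = ⌊(1 - ε) * (binomLe m r : ℝ)⌋₊ →
                (1 - ρ) *
                    (Nat.card {Z : Finset (Fin m → ZMod 2) // Z.card = K} : ℝ)
                  ≤ (Nat.card {Z : Finset (Fin m → ZMod 2) //
                      Z.card = K ∧
                      LinearIndependent (ZMod 2)
                        (fun z : {x // x ∈ Z} => monVec m r z.1)} : ℝ) := by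
  refine ⟨2⁻¹ ^ 60, by positivity, fun ε hε hε1 ρ hρ => ?_⟩
  obtain ⟨m₀, hm₀⟩ := Filter.eventually_atTop.mp
    ((eventually_sum_one_add_bias_pow_linear_le hε hρ).and
      (eventually_sum_one_add_bias_pow_le hε (lt_min hρ one_pos) (min_le_right ρ 1)))
  refine ⟨m₀, fun m hm r hr1 hr K hK => card_linearIndependent_monVec_ge ?_⟩
  have hKN : (K : ℝ) ≤ (1 - ε) * binomLe m r := by
    rw [hK]
    exact Nat.floor_le (mul_nonneg (by linarith) (Nat.cast_nonneg _))
  rcases hr1.eq_or_lt with rfl | hr2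
  · exact (hm₀ m hm).1 K hKN
  · refine ((hm₀ m hm).2 r hr2 hr K hKN).trans ?_
    gcongr
    exact min_le_left ρ 1
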